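/- arXiv:1404.0165 — 3 statements merged into one kernel-verified Lean document; each statement's English description precedes it below -/
import Mathlib

section
/- Let α and β be two irrational vectors in ℝ^d and let T be an invertible linear map on ℝ^d. Then the image under T of every Riemann measurable bounded remainder set with respect to α is a bounded remainder set with respect to β if and only if T(ℤα + ℤ^d) ⊆ ℤβ + ℤ^d. -/
/-!
Birkhoff sums of `χ_S` along the rotation by `α` count the points `(q, p)` of `ℤ × ℤ^d` whose
projection `qα + p`, shifted by `x`, lies in `S` and whose height `q` lies in an interval of length
`n` (`finite_hits_and_ncard`).

Suppose `T(ℤα + ℤ^d) ⊆ ℤβ + ℤ^d`. Then `T` lifts to an injective integer matrix `A` on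
`ℤ × ℤ^d` (`exists_lift`), whose image has finite index. The height of `A g` is `c` times the
height of `g` plus a linear function of the projection of `g`, with `c ≠ 0` by irrationality of
`α` (`exists_height`). As `S` is bounded, the points counted for `T '' S` in a slab of height `n`
are, in each coset of the image of `A`, the points counted for a translate of `S` in a slab of
height `n / |c|`, up to a bounded error (`ncard_slab`). So the Birkhoff sums for `T '' S` grow
linearly with a bounded error, and integration identifies the slope with `Leb (T '' S)`
(`isBRS_of_linear_growth`, `isBRS_image_of_lat`).

Conversely, suppose that `T` preserves the bounded remainder property, and let `γ ∈ ℤα + ℤ^d` with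
`‖γ‖ ≥ 1`. The unit cube is a bounded remainder set, and so is the cube with any Riemann measurable
piece moved by `γ`. Comparing the two images, `χ_B - χ_{B + Tγ}` has bounded Birkhoff sums along
the rotation by `β` for every Riemann measurable `B ⊆ T '' cube` (`swapSum_bounded`). If `Tγ` were
not in `ℤβ + ℤ^d`, an orbit could be made to return to a small set `B'` as often as desired without
ever visiting `B' + Tγ` (`exists_hump`). A gliding hump then collects such sets, with heights
tending to infinity and shrinking to a point, into one Riemann measurable `B` with unbounded
Birkhoff sums, a contradiction (`mem_lat_of_bounded`). Vectors with `‖γ‖ < 1` are differences of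
long ones (`map_mem_lat`).
-/

open MeasureTheory

/-- The multiplicity function of the projection of `S ⊆ ℝ^d` to the torus `ℝ^d/ℤ^d`,
viewed as a `ℤ^d`-periodic function on `ℝ^d`. -/
noncomputable def multFn {d : ℕ} (S : Set (Fin d → ℝ)) (x : Fin d → ℝ) : ℝ :=
  ∑' k : Fin d → ℤ, Set.indicator S (fun _ => (1 : ℝ)) (x + fun i => (k i : ℝ))

/-- The discrepancy `∑_{k=0}^{n-1} χ_S(x + k v) − n · Leb(S)`. -/
noncomputable def disc {d : ℕ} (v : Fin d → ℝ) (S : Set (Fin d → ℝ)) (n : ℕ)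
    (x : Fin d → ℝ) : ℝ :=
  (∑ k ∈ Finset.range n, multFn S (x + (k : ℝ) • v)) - n * (volume S).toReal

/-- `S` is a bounded remainder set with respect to the vector `v`. -/
def IsBRS {d : ℕ} (v : Fin d → ℝ) (S : Set (Fin d → ℝ)) : Prop :=
  ∃ C : ℝ, ∀ᵐ x : Fin d → ℝ, ∀ n : ℕ, 1 ≤ n → |disc v S n x| ≤ C

/-- `α ∈ ℝ^d` is an irrational vector: `1, α₁, …, α_d` are linearly independent over `ℚ`. -/
def IsIrrationalVector {d : ℕ} (α : Fin d → ℝ) : Prop :=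
  ∀ (n₀ : ℤ) (n : Fin d → ℤ), (n₀ : ℝ) + ∑ i, (n i : ℝ) * α i = 0 → n₀ = 0 ∧ n = 0

/-- The subgroup `ℤα + ℤ^d` of `ℝ^d`. -/
def lat {d : ℕ} (α : Fin d → ℝ) : Set (Fin d → ℝ) :=
  {v | ∃ (q : ℤ) (p : Fin d → ℤ), v = (q : ℝ) • α + fun i => (p i : ℝ)}

/-- The parallelepiped spanned by the vectors `v 1, …, v d`. -/
def paral {d : ℕ} (v : Fin d → Fin d → ℝ) : Set (Fin d → ℝ) :=
  {x | ∃ t : Fin d → ℝ, (∀ k, 0 ≤ t k ∧ t k < 1) ∧ x = ∑ k, t k • v k}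

/-- A `ℤ^d`-periodic function on `ℝ^d`, i.e. a function on the torus. -/
def IsZdPeriodic {d : ℕ} (g : (Fin d → ℝ) → ℝ) : Prop :=
  ∀ (x : Fin d → ℝ) (k : Fin d → ℤ), g (x + fun i => (k i : ℝ)) = g x

/-- `g` is a transfer function for `S` with respect to `v`:
a function on the torus with `χ_S(x) − Leb S = g(x) − g(x−v)` a.e. -/
def IsTransfer {d : ℕ} (v : Fin d → ℝ) (S : Set (Fin d → ℝ)) (g : (Fin d → ℝ) → ℝ) : Prop :=
  IsZdPeriodic g ∧
    ∀ᵐ x : Fin d → ℝ, multFn S x - (volume S).toReal = g x - g (x - v)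

/-- A bounded function whose set of discontinuity points is Lebesgue-null. -/
def RiemannIntegrableFn {d : ℕ} (g : (Fin d → ℝ) → ℝ) : Prop :=
  (∃ M : ℝ, ∀ x, |g x| ≤ M) ∧ volume {x | ¬ ContinuousAt g x} = 0

/-- A bounded set is Riemann measurable if its boundary is Lebesgue-null. -/
def IsRiemannMeasurable {d : ℕ} (S : Set (Fin d → ℝ)) : Prop :=
  Bornology.IsBounded S ∧ volume (frontier S) = 0

/-- `S` and `S'` are equidecomposable, with pieces satisfying the predicate `P`,
using translations by vectors in `Γ`. -/
def EquidecompBy {d : ℕ} (P : Set (Fin d → ℝ) → Prop)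
    (S S' : Set (Fin d → ℝ)) (Γ : Set (Fin d → ℝ)) : Prop :=
  ∃ (N : ℕ) (A : Fin N → Set (Fin d → ℝ)) (γ : Fin N → Fin d → ℝ),
    (∀ i, P (A i)) ∧ (∀ i, γ i ∈ Γ) ∧
    (∀ i j, i ≠ j → volume (A i ∩ A j) = 0) ∧
    volume (symmDiff S (⋃ i, A i)) = 0 ∧
    (∀ i j, i ≠ j → volume (((fun x => x + γ i) '' A i) ∩ ((fun x => x + γ j) '' A j)) = 0) ∧
    volume (symmDiff S' (⋃ i, (fun x => x + γ i) '' A i)) = 0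

/-- A set is centrally symmetric if it equals its reflection about some point `c`. -/
def IsCentrallySymmetric {d : ℕ} (A : Set (Fin d → ℝ)) : Prop :=
  ∃ c : Fin d → ℝ, ∀ x, x ∈ A ↔ (2 : ℝ) • c - x ∈ A

/-! ### Multiplicity functions -/

/-- An integer vector, seen in `ℝ^d`. -/
def zc {d : ℕ} (k : Fin d → ℤ) : Fin d → ℝ := fun i => (k i : ℝ)

lemma zc_add {d : ℕ} (k l : Fin d → ℤ) : zc (k + l) = zc k + zc l := by
  ext i; simp [zc]

lemma zc_neg {d : ℕ} (k : Fin d → ℤ) : zc (-k) = -zc k := by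
  ext i; simp [zc]

lemma zc_sub {d : ℕ} (k l : Fin d → ℤ) : zc (k - l) = zc k - zc l := by
  ext i; simp [zc]

lemma multFn_def {d : ℕ} (S : Set (Fin d → ℝ)) (x : Fin d → ℝ) :
    multFn S x = ∑' k : Fin d → ℤ, Set.indicator S (fun _ => (1 : ℝ)) (x + zc k) := rfl

lemma finite_hits {d : ℕ} {S : Set (Fin d → ℝ)} (hS : Bornology.IsBounded S)
    (x : Fin d → ℝ) : {k : Fin d → ℤ | x + zc k ∈ S}.Finite := by
  obtain ⟨M, hM⟩ := hS.exists_norm_le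
  refine (Set.Finite.pi' (fun i : Fin d => Set.finite_Icc (⌊-M - ‖x‖⌋) (⌈M + ‖x‖⌉))).subset ?_
  intro k hk i
  have h1 : |x i + (k i : ℝ)| ≤ M := (norm_le_pi_norm (x + zc k) i).trans (hM _ hk)
  have h2 : |x i| ≤ ‖x‖ := norm_le_pi_norm x i
  have h3 := abs_le.1 h1
  have h4 := abs_le.1 h2
  constructor
  · have : ((⌊-M - ‖x‖⌋ : ℤ) : ℝ) ≤ (k i : ℝ) := (Int.floor_le _).trans (by linarith)
    exact_mod_cast this
  · have : (k i : ℝ) ≤ ((⌈M + ‖x‖⌉ : ℤ) : ℝ) := le_trans (by linarith) (Int.le_ceil _)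
    exact_mod_cast this

lemma summable_hits {d : ℕ} {S : Set (Fin d → ℝ)} (hS : Bornology.IsBounded S)
    (x : Fin d → ℝ) :
    Summable fun k : Fin d → ℤ => Set.indicator S (fun _ => (1 : ℝ)) (x + zc k) := by
  refine summable_of_hasFiniteSupport ((finite_hits hS x).subset ?_)
  intro k hk
  by_contra h
  exact hk (Set.indicator_of_notMem (s := S) h _)

lemma multFn_eq_ncard {d : ℕ} {S : Set (Fin d → ℝ)} (hS : Bornology.IsBounded S)
    (x : Fin d → ℝ) : multFn S x = ({k : Fin d → ℤ | x + zc k ∈ S}.ncard : ℝ) := by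
  classical
  have hf := finite_hits hS x
  rw [multFn_def, tsum_eq_sum (s := hf.toFinset), Set.ncard_eq_toFinset_card _ hf,
    Finset.sum_congr rfl (g := fun _ => (1 : ℝ))]
  · simp
  · intro k hk
    exact Set.indicator_of_mem (by simpa using hk) _
  · intro k hk
    exact Set.indicator_of_notMem (by simpa using hk) _

lemma multFn_nonneg {d : ℕ} (S : Set (Fin d → ℝ)) (x : Fin d → ℝ) : 0 ≤ multFn S x :=
  tsum_nonneg fun _ => Set.indicator_nonneg (fun _ _ => zero_le_one) _

lemma multFn_eq_zero {d : ℕ} {S : Set (Fin d → ℝ)} {x : Fin d → ℝ}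
    (h : ∀ k, x + zc k ∉ S) : multFn S x = 0 := by
  rw [multFn_def]
  simp [Set.indicator_of_notMem (h _)]

lemma one_le_multFn {d : ℕ} {S : Set (Fin d → ℝ)} (hS : Bornology.IsBounded S)
    {x : Fin d → ℝ} {k : Fin d → ℤ} (h : x + zc k ∈ S) : 1 ≤ multFn S x := by
  rw [multFn_eq_ncard hS]
  have : 0 < {k : Fin d → ℤ | x + zc k ∈ S}.ncard :=
    (Set.ncard_pos (finite_hits hS x)).2 ⟨k, h⟩
  exact_mod_cast this

lemma multFn_add_zc {d : ℕ} (S : Set (Fin d → ℝ)) (x : Fin d → ℝ) (z : Fin d → ℤ) :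
    multFn S (x + zc z) = multFn S x := by
  rw [multFn_def, multFn_def, ← (Equiv.addLeft z).tsum_eq
    (fun k => Set.indicator S (fun _ => (1 : ℝ)) (x + zc k))]
  simp [zc_add, add_assoc]

lemma multFn_translate {d : ℕ} (S : Set (Fin d → ℝ)) (v x : Fin d → ℝ) :
    multFn ((fun y => y + v) '' S) x = multFn S (x - v) := by
  rw [multFn_def, multFn_def]
  congr 1; ext k
  rw [Set.image_add_right]
  have e : x + zc k + -v = x - v + zc k := by abel
  by_cases h : x - v + zc k ∈ S
  · rw [Set.indicator_of_mem h, Set.indicator_of_mem (by simpa [e] using h)]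
  · rw [Set.indicator_of_notMem h, Set.indicator_of_notMem (by simpa [e] using h)]

lemma multFn_union {d : ℕ} {A B : Set (Fin d → ℝ)} (hA : Bornology.IsBounded A)
    (hB : Bornology.IsBounded B) (h : Disjoint A B) (x : Fin d → ℝ) :
    multFn (A ∪ B) x = multFn A x + multFn B x := by
  simp only [multFn_def]
  rw [← (summable_hits hA x).tsum_add (summable_hits hB x)]
  congr 1; ext k
  rw [Set.indicator_union_of_disjoint h]

/-- The half-open unit cube, whose integer translates tile `ℝ^d`. -/
def cube (d : ℕ) : Set (Fin d → ℝ) := Set.pi Set.univ fun _ => Set.Ico 0 1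

lemma existsUnique_cube {d : ℕ} (x : Fin d → ℝ) (k : Fin d → ℤ) :
    x + zc k ∈ cube d ↔ k = fun i => -⌊x i⌋ := by
  simp only [cube, Set.mem_univ_pi, Set.mem_Ico, Pi.add_apply, zc]
  constructor
  · intro h
    ext i
    have : ⌊x i⌋ = -k i := Int.floor_eq_iff.2
      ⟨by push_cast; linarith [(h i).1], by push_cast; linarith [(h i).2]⟩
    omega
  · rintro rfl i
    push_cast
    exact ⟨by linarith [Int.floor_le (x i)], by linarith [Int.lt_floor_add_one (x i)]⟩

lemma isBounded_cube (d : ℕ) : Bornology.IsBounded (cube d) :=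
  Bornology.IsBounded.pi fun _ => Metric.isBounded_Ico 0 1

lemma multFn_cube {d : ℕ} (x : Fin d → ℝ) : multFn (cube d) x = 1 := by
  rw [multFn_eq_ncard (isBounded_cube d)]
  simp [existsUnique_cube]

lemma volume_cube (d : ℕ) : volume (cube d) = 1 := by
  simp [cube, Real.volume_pi_Ico]

lemma measurableSet_cube (d : ℕ) : MeasurableSet (cube d) :=
  MeasurableSet.univ_pi fun _ => measurableSet_Ico

lemma ofReal_multFn {d : ℕ} {S : Set (Fin d → ℝ)} (hS : Bornology.IsBounded S)
    (w y : Fin d → ℝ) : ENNReal.ofReal (multFn S (y + w)) =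
      ∑' k : Fin d → ℤ, Set.indicator ((fun y => y + (w + zc k)) ⁻¹' S) (fun _ => 1) y := by
  rw [multFn_def, ENNReal.ofReal_tsum_of_nonneg
    (fun _ => Set.indicator_nonneg (fun _ _ => zero_le_one) _) (summable_hits hS _)]
  congr 1; ext k
  by_cases h : y + w + zc k ∈ S
  · rw [Set.indicator_of_mem h, Set.indicator_of_mem (by simpa [← add_assoc] using h)]
    simp
  · rw [Set.indicator_of_notMem h, Set.indicator_of_notMem (by simpa [← add_assoc] using h)]
    simp

lemma nullMeasurableSet_translate {d : ℕ} {S : Set (Fin d → ℝ)} (hm : NullMeasurableSet S)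
    (u : Fin d → ℝ) : NullMeasurableSet ((fun y => y + u) ⁻¹' S) :=
  hm.preimage (measurePreserving_add_right volume u).quasiMeasurePreserving

lemma aemeasurable_multFn {d : ℕ} {S : Set (Fin d → ℝ)} (hS : Bornology.IsBounded S)
    (hm : NullMeasurableSet S) (w : Fin d → ℝ) :
    AEMeasurable fun y => ENNReal.ofReal (multFn S (y + w)) := by
  simp only [ofReal_multFn hS]
  exact AEMeasurable.tsum fun k =>
    measurable_const.aemeasurable.indicator₀ (nullMeasurableSet_translate hm _)

/-- The multiplicity function of `S` has mean `Leb S` over the torus. -/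
lemma lintegral_multFn {d : ℕ} {S : Set (Fin d → ℝ)} (hS : Bornology.IsBounded S)
    (hm : NullMeasurableSet S) (w : Fin d → ℝ) :
    ∫⁻ y in cube d, ENNReal.ofReal (multFn S (y + w)) = volume S := by
  have hpre := nullMeasurableSet_translate hm
  simp only [ofReal_multFn hS]
  rw [lintegral_tsum (fun k => ((measurable_const).aemeasurable.indicator₀ (hpre _)).restrict)]
  have h2 : ∀ k : Fin d → ℤ, ∫⁻ y in cube d,
      Set.indicator ((fun y => y + (w + zc k)) ⁻¹' S) (fun _ => (1 : ENNReal)) y =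
      volume (S ∩ (fun y => y + -(w + zc k)) ⁻¹' cube d) := by
    intro k
    rw [lintegral_indicator_const₀ ((hpre _).mono_ac Measure.restrict_le_self.absolutelyContinuous),
      one_mul, Measure.restrict_apply₀' (measurableSet_cube d).nullMeasurableSet,
      ← measure_preimage_add_right volume (w + zc k)
        (S ∩ (fun y => y + -(w + zc k)) ⁻¹' cube d)]
    congr 1
    ext y
    simp only [Set.mem_inter_iff, Set.mem_preimage, add_neg_cancel_right]
  simp only [h2]
  rw [← measure_iUnion₀]
  · rw [← Set.inter_iUnion, Set.inter_eq_left.2]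
    intro y _
    have := (existsUnique_cube (y - w) (fun i => -⌊(y - w) i⌋)).2 rfl
    refine Set.mem_iUnion.2 ⟨-(fun i => -⌊(y - w) i⌋), ?_⟩
    rw [Set.mem_preimage, zc_neg]
    convert this using 1
    abel
  · intro k l hkl
    refine Disjoint.aedisjoint (Set.disjoint_left.2 fun y hk hl => hkl ?_)
    have e : ∀ k : Fin d → ℤ, y + -(w + zc k) = (y - w) + zc (-k) := by
      intro k; rw [zc_neg]; abel
    have hk' := hk.2
    have hl' := hl.2
    simp only [Set.mem_preimage, e, existsUnique_cube] at hk' hl'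
    exact neg_injective (hk'.trans hl'.symm)
  · intro k
    exact hm.inter ((measurableSet_cube d).preimage (measurable_add_const _)).nullMeasurableSet

/-! ### Riemann measurable sets -/

lemma IsRiemannMeasurable.nullMeasurableSet {d : ℕ} {S : Set (Fin d → ℝ)}
    (h : IsRiemannMeasurable S) : NullMeasurableSet S :=
  nullMeasurableSet_of_null_frontier h.2

lemma IsRiemannMeasurable.union {d : ℕ} {A B : Set (Fin d → ℝ)}
    (hA : IsRiemannMeasurable A) (hB : IsRiemannMeasurable B) : IsRiemannMeasurable (A ∪ B) := by
  refine ⟨hA.1.union hB.1, measure_mono_null (frontier_union_subset A B) ?_⟩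
  exact measure_union_null (measure_mono_null Set.inter_subset_left hA.2)
    (measure_mono_null Set.inter_subset_right hB.2)

lemma IsRiemannMeasurable.diff {d : ℕ} {A B : Set (Fin d → ℝ)}
    (hA : IsRiemannMeasurable A) (hB : IsRiemannMeasurable B) : IsRiemannMeasurable (A \ B) := by
  refine ⟨hA.1.subset Set.sdiff_subset, ?_⟩
  rw [Set.sdiff_eq]
  refine measure_mono_null (frontier_inter_subset A Bᶜ) ?_
  rw [frontier_compl]
  exact measure_union_null (measure_mono_null Set.inter_subset_left hA.2)
    (measure_mono_null Set.inter_subset_right hB.2)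

lemma IsRiemannMeasurable.translate {d : ℕ} {A : Set (Fin d → ℝ)}
    (hA : IsRiemannMeasurable A) (v : Fin d → ℝ) :
    IsRiemannMeasurable ((fun y => y + v) '' A) := by
  refine ⟨?_, ?_⟩
  · obtain ⟨M, hM⟩ := hA.1.exists_norm_le
    refine isBounded_iff_forall_norm_le.2 ⟨M + ‖v‖, ?_⟩
    rintro _ ⟨y, hy, rfl⟩
    exact (norm_add_le _ _).trans (by gcongr; exact hM y hy)
  · have := (Homeomorph.addRight v).image_frontier A
    simp only [Homeomorph.coe_addRight] at this
    rw [← this, Set.image_add_right, measure_preimage_add_right]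
    exact hA.2

lemma isBounded_image_linear {d : ℕ} (T : (Fin d → ℝ) ≃ₗ[ℝ] (Fin d → ℝ))
    {A : Set (Fin d → ℝ)} (hA : Bornology.IsBounded A) : Bornology.IsBounded (T '' A) :=
  T.toContinuousLinearEquiv.lipschitz.isBounded_image hA

lemma IsRiemannMeasurable.image_linear {d : ℕ} {A : Set (Fin d → ℝ)}
    (hA : IsRiemannMeasurable A) (T : (Fin d → ℝ) ≃ₗ[ℝ] (Fin d → ℝ)) :
    IsRiemannMeasurable (T '' A) := by
  refine ⟨isBounded_image_linear T hA.1, ?_⟩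
  have := T.toContinuousLinearEquiv.toHomeomorph.image_frontier A
  have h2 : frontier (T '' A) = (T : (Fin d → ℝ) →ₗ[ℝ] (Fin d → ℝ)) '' frontier A := this.symm
  rw [h2, Measure.addHaar_image_linearMap, hA.2, mul_zero]

lemma isRiemannMeasurable_cube (d : ℕ) : IsRiemannMeasurable (cube d) :=
  ⟨isBounded_cube d, Convex.addHaar_frontier volume (convex_pi fun _ _ => convex_Ico 0 1)⟩

lemma isRiemannMeasurable_ball {d : ℕ} (x : Fin d → ℝ) (r : ℝ) :
    IsRiemannMeasurable (Metric.ball x r) :=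
  ⟨Metric.isBounded_ball, Convex.addHaar_frontier volume (convex_ball x r)⟩

lemma isRiemannMeasurable_biUnion_ball {d : ℕ} {ι : Type*} (K : Finset ι)
    (a : ι → Fin d → ℝ) (r : ℝ) :
    IsRiemannMeasurable (⋃ k ∈ K, Metric.ball (a k) r) := by
  classical
  induction K using Finset.induction_on with
  | empty => simp [IsRiemannMeasurable]
  | insert k K _ ih =>
    rw [Finset.set_biUnion_insert]
    exact (isRiemannMeasurable_ball _ _).union ih

/-! ### The lifted group `ℤ × ℤ^d` and the counting of its points -/

/-- The homomorphism `(q, p) ↦ qα + p` from `ℤ × ℤ^d` onto `ℤα + ℤ^d`. -/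
def proj {d : ℕ} (α : Fin d → ℝ) (g : ℤ × (Fin d → ℤ)) : Fin d → ℝ := (g.1 : ℝ) • α + zc g.2

lemma proj_add {d : ℕ} (α : Fin d → ℝ) (g h : ℤ × (Fin d → ℤ)) :
    proj α (g + h) = proj α g + proj α h := by
  simp only [proj, Prod.fst_add, Prod.snd_add, zc_add, Int.cast_add, add_smul]
  abel

lemma proj_mem_lat {d : ℕ} (α : Fin d → ℝ) (g : ℤ × (Fin d → ℤ)) : proj α g ∈ lat α :=
  ⟨g.1, g.2, rfl⟩

lemma mem_lat_iff {d : ℕ} {α v : Fin d → ℝ} : v ∈ lat α ↔ ∃ g, proj α g = v :=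
  ⟨fun ⟨q, p, h⟩ => ⟨(q, p), h.symm⟩, by rintro ⟨g, rfl⟩; exact proj_mem_lat α g⟩

/-- For `d ≥ 1` an irrational vector has an irrational coordinate, so that `ℤα + ℤ^d` is free of
rank `d + 1`. -/
lemma proj_injective {d : ℕ} (hd : 1 ≤ d) {α : Fin d → ℝ} (hα : IsIrrationalVector α) :
    Function.Injective (proj α) := by
  intro g h hgh
  have h1 : ∀ i, ((g.1 - h.1 : ℤ) : ℝ) * α i + ((g.2 i - h.2 i : ℤ) : ℝ) = 0 := by
    intro i
    have := congrFun hgh i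
    simp only [proj, zc, Pi.add_apply, Pi.smul_apply, smul_eq_mul] at this
    push_cast
    linarith
  have h2 : g.1 = h.1 := by
    have i : Fin d := ⟨0, hd⟩
    have := (hα (g.2 i - h.2 i) (Pi.single i (g.1 - h.1)) (by
      rw [Finset.sum_eq_single i]
      · rw [Pi.single_eq_same]; linarith [h1 i]
      · intro j _ hj; simp [Pi.single_eq_of_ne hj]
      · simp)).2
    have := congrFun this i
    simp only [Pi.single_eq_same, Pi.zero_apply] at this
    omega
  refine Prod.ext h2 (funext fun i => ?_)
  have := h1 i
  rw [h2, sub_self, Int.cast_zero, zero_mul, zero_add, Int.cast_eq_zero] at this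
  omega

/-- The points of `ℤ × ℤ^d` of height in `[m, m + n)` whose projection, shifted by `x`, lands in
`S`. Their number is the Birkhoff sum of the multiplicity function along `x + mα, …`. -/
def hits {d : ℕ} (α : Fin d → ℝ) (S : Set (Fin d → ℝ)) (x : Fin d → ℝ) (m : ℤ) (n : ℕ) :
    Set (ℤ × (Fin d → ℤ)) :=
  {g | m ≤ g.1 ∧ g.1 < m + n ∧ x + proj α g ∈ S}

lemma hits_succ {d : ℕ} (α : Fin d → ℝ) (S : Set (Fin d → ℝ)) (x : Fin d → ℝ) (m : ℤ) (n : ℕ) :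
    hits α S x m (n + 1) = hits α S x m n ∪
      (fun p => (m + n, p)) '' {p | (x + (m : ℝ) • α) + (n : ℝ) • α + zc p ∈ S} := by
  have e : ∀ p : Fin d → ℤ, (x + (m : ℝ) • α) + (n : ℝ) • α + zc p = x + proj α (m + n, p) := by
    intro p
    simp only [proj]
    push_cast
    rw [add_smul]; abel
  ext ⟨q, p⟩
  simp only [hits, Set.mem_ofPred_eq, Set.mem_union, Set.mem_image, Prod.mk.injEq, e]
  constructor
  · rintro ⟨h1, h2, h3⟩
    by_cases h : q < m + n
    · exact Or.inl ⟨h1, h, h3⟩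
    · obtain rfl : q = m + n := by push_cast at h2; omega
      exact Or.inr ⟨p, h3, rfl, rfl⟩
  · rintro (⟨h1, h2, h3⟩ | ⟨p', h3, rfl, rfl⟩)
    · exact ⟨h1, by push_cast; omega, h3⟩
    · exact ⟨by omega, by push_cast; omega, h3⟩

lemma finite_hits_and_ncard {d : ℕ} (α : Fin d → ℝ) {S : Set (Fin d → ℝ)}
    (hS : Bornology.IsBounded S) (x : Fin d → ℝ) (m : ℤ) (n : ℕ) :
    (hits α S x m n).Finite ∧ ((hits α S x m n).ncard : ℝ) =
      ∑ k ∈ Finset.range n, multFn S ((x + (m : ℝ) • α) + (k : ℝ) • α) := by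
  induction n with
  | zero =>
    have : hits α S x m 0 = ∅ := by
      ext g; simp only [hits, Set.mem_ofPred_eq, Set.mem_empty_iff_false, iff_false]
      push_cast; rintro ⟨h1, h2, -⟩; omega
    simp [this]
  | succ n ih =>
    have hinj : Function.Injective (fun p : Fin d → ℤ => ((m + n : ℤ), p)) :=
      fun p p' h => (Prod.mk.inj h).2
    have hf := (finite_hits hS ((x + (m : ℝ) • α) + (n : ℝ) • α)).image
      (fun p : Fin d → ℤ => ((m + n : ℤ), p))
    rw [hits_succ]
    refine ⟨ih.1.union hf, ?_⟩
    rw [Set.ncard_union_eq _ ih.1 hf, Set.ncard_image_of_injective _ hinj, Finset.sum_range_succ,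
      Nat.cast_add, ih.2, multFn_eq_ncard hS]
    refine Set.disjoint_left.2 ?_
    rintro _ h1 ⟨p, _, rfl⟩
    exact lt_irrefl _ h1.2.1

/-- For a bounded remainder set the starting height `m` can be arbitrary, with the same constant. -/
lemma IsBRS.hits_bound {d : ℕ} {α : Fin d → ℝ} {S : Set (Fin d → ℝ)}
    (hS : Bornology.IsBounded S) (h : IsBRS α S) :
    ∃ C : ℝ, ∀ᵐ x : Fin d → ℝ, ∀ (m : ℤ) (n : ℕ),
      |((hits α S x m n).ncard : ℝ) - n * (volume S).toReal| ≤ C := by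
  obtain ⟨C, hC⟩ := h
  refine ⟨|C|, ae_all_iff.2 fun m => ?_⟩
  filter_upwards [(measurePreserving_add_right volume ((m : ℝ) • α)).quasiMeasurePreserving.ae hC]
    with x hx n
  rw [(finite_hits_and_ncard α hS x m n).2]
  rcases Nat.eq_zero_or_pos n with rfl | hn
  · simp
  · exact (hx n hn).trans (le_abs_self C)

/-- Points of `ℤ × ℤ^d` over `S`, cut out by a condition that differs boundedly from the height
lying in an interval of length `n / |c|`, are counted up to a bounded error. -/
lemma ncard_slab {d : ℕ} {α : Fin d → ℝ} {S : Set (Fin d → ℝ)}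
    (hS : Bornology.IsBounded S) {x : Fin d → ℝ} {C L : ℝ} (hL : 0 ≤ L)
    (hx : ∀ (m : ℤ) (n : ℕ), |((hits α S x m n).ncard : ℝ) - n * L| ≤ C)
    {c t R : ℝ} (hc : c ≠ 0) (hR : 0 ≤ R) (n : ℕ) {E : Set (ℤ × (Fin d → ℤ))}
    (houter : ∀ g ∈ E, x + proj α g ∈ S ∧ |c * g.1 - t| ≤ n / 2 + R)
    (hinner : ∀ g, x + proj α g ∈ S → |c * g.1 - t| < n / 2 - R → g ∈ E) :
    E.Finite ∧ |(E.ncard : ℝ) - n * (L / |c|)| ≤ C + L * (2 * R / |c| + 1) := by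
  have hc' : 0 < |c| := abs_pos.2 hc
  have hz : ∀ q : ℝ, |c * q - t| = |c| * |q - t / c| := by
    intro q; rw [← abs_mul]; congr 1; field_simp
  have e1 : (2 * ((n / 2 + R) / |c|) + 1) * L = n * (L / |c|) + L * (2 * R / |c| + 1) := by
    field_simp; ring
  have e2 : (2 * ((n / 2 - R) / |c|) - 1) * L = n * (L / |c|) - L * (2 * R / |c| + 1) := by
    field_simp; ring
  set z := t / c
  have hsub : E ⊆ hits α S x ⌈z - (n / 2 + R) / |c|⌉ (⌊2 * ((n / 2 + R) / |c|)⌋₊ + 1) := by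
    intro g hg
    obtain ⟨h1, h2⟩ := houter g hg
    rw [hz, ← le_div_iff₀' hc', abs_le] at h2
    refine ⟨Int.ceil_le.2 (by linarith), ?_, h1⟩
    have h3 := Nat.lt_floor_add_one (2 * ((n / 2 + R) / |c|))
    have h4 := Int.le_ceil (z - (n / 2 + R) / |c|)
    have : (g.1 : ℝ) < ((⌈z - (n / 2 + R) / |c|⌉ +
        ((⌊2 * ((n / 2 + R) / |c|)⌋₊ + 1 : ℕ) : ℤ) : ℤ) : ℝ) := by
      push_cast; linarith [h2.2]
    exact_mod_cast this
  have hfin := (finite_hits_and_ncard α hS x _ _).1.subset hsub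
  have hsup : hits α S x (⌊z - (n / 2 - R) / |c|⌋ + 1) (⌈2 * ((n / 2 - R) / |c|)⌉₊ - 1) ⊆ E := by
    rintro g ⟨h1, h2, h3⟩
    refine hinner g h3 ?_
    rw [hz, ← lt_div_iff₀' hc', abs_lt]
    have hN : ⌈2 * ((n / 2 - R) / |c|)⌉₊ - 1 < ⌈2 * ((n / 2 - R) / |c|)⌉₊ := by omega
    rw [Nat.lt_ceil] at hN
    have h4 : g.1 ≤ ⌊z - (n / 2 - R) / |c|⌋ + (⌈2 * ((n / 2 - R) / |c|)⌉₊ - 1 : ℕ) := by omega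
    have h5 : (g.1 : ℝ) ≤ ⌊z - (n / 2 - R) / |c|⌋ + (⌈2 * ((n / 2 - R) / |c|)⌉₊ - 1 : ℕ) := by
      exact_mod_cast h4
    have h6 := Int.floor_le (z - (n / 2 - R) / |c|)
    have h7 := Int.lt_floor_add_one (z - (n / 2 - R) / |c|)
    have h8 : ((⌊z - (n / 2 - R) / |c|⌋ : ℝ) + 1) ≤ (g.1 : ℝ) := by exact_mod_cast h1
    constructor <;> linarith
  have hle := Set.ncard_le_ncard hsub (finite_hits_and_ncard α hS x _ _).1
  have hge := Set.ncard_le_ncard hsup hfin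
  refine ⟨hfin, abs_le.2 ⟨?_, ?_⟩⟩
  · have h1 := (abs_le.1 (hx (⌊z - (n / 2 - R) / |c|⌋ + 1) (⌈2 * ((n / 2 - R) / |c|)⌉₊ - 1))).1
    have h2 : (2 * ((n / 2 - R) / |c|) - 1) ≤ ((⌈2 * ((n / 2 - R) / |c|)⌉₊ - 1 : ℕ) : ℝ) := by
      have := Nat.le_ceil (2 * ((n / 2 - R) / |c|))
      have h' : ((⌈2 * ((n / 2 - R) / |c|)⌉₊ : ℕ) : ℝ) ≤
        ((⌈2 * ((n / 2 - R) / |c|)⌉₊ - 1 : ℕ) : ℝ) + 1 := by exact_mod_cast (by omega)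
      linarith
    have h3 := mul_le_mul_of_nonneg_right h2 hL
    have h4 : ((hits α S x (⌊z - (n / 2 - R) / |c|⌋ + 1)
      (⌈2 * ((n / 2 - R) / |c|)⌉₊ - 1)).ncard : ℝ) ≤ E.ncard := by exact_mod_cast hge
    linarith
  · have h1 := (abs_le.1 (hx ⌈z - (n / 2 + R) / |c|⌉ (⌊2 * ((n / 2 + R) / |c|)⌋₊ + 1))).2
    have h2 : ((⌊2 * ((n / 2 + R) / |c|)⌋₊ + 1 : ℕ) : ℝ) ≤ 2 * ((n / 2 + R) / |c|) + 1 := by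
      push_cast
      linarith [Nat.floor_le (show 0 ≤ 2 * (((n : ℝ) / 2 + R) / |c|) by positivity)]
    have h3 := mul_le_mul_of_nonneg_right h2 hL
    have h4 : (E.ncard : ℝ) ≤ ((hits α S x ⌈z - (n / 2 + R) / |c|⌉
      (⌊2 * ((n / 2 + R) / |c|)⌋₊ + 1)).ncard : ℝ) := by exact_mod_cast hle
    linarith

/-! ### Inclusion of the groups implies preservation of bounded remainder sets -/

/-- A bounded error in the Birkhoff sums forces the linear coefficient to be the mean `Leb S`. -/
lemma isBRS_of_linear_growth {d : ℕ} {β : Fin d → ℝ} {S : Set (Fin d → ℝ)}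
    (hS : Bornology.IsBounded S) (hm : NullMeasurableSet S) {κ D : ℝ}
    (h : ∀ᵐ y : Fin d → ℝ, ∀ n : ℕ,
      |(∑ k ∈ Finset.range n, multFn S (y + (k : ℝ) • β)) - n * κ| ≤ D) :
    IsBRS β S := by
  have hfin : volume S ≠ ⊤ := hS.measure_lt_top.ne
  have hcube : volume.restrict (cube d) Set.univ = 1 := by
    rw [Measure.restrict_apply_univ, volume_cube]
  have hvol : ∀ n : ℕ, |n * κ - n * (volume S).toReal| ≤ D := by
    intro n
    have hint : ∫⁻ y in cube d, ENNReal.ofReal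
        (∑ k ∈ Finset.range n, multFn S (y + (k : ℝ) • β)) = n * volume S := by
      simp only [ENNReal.ofReal_sum_of_nonneg fun _ _ => multFn_nonneg _ _]
      rw [lintegral_finsetSum' _ fun k _ => (aemeasurable_multFn hS hm _).restrict]
      simp [lintegral_multFn hS hm]
    have hup : (n : ENNReal) * volume S ≤ ENNReal.ofReal (n * κ + D) := by
      rw [← hint, ← mul_one (ENNReal.ofReal (n * κ + D)), ← hcube, ← lintegral_const]
      refine lintegral_mono_ae (ae_restrict_of_ae ?_)
      filter_upwards [h] with y hy
      exact ENNReal.ofReal_le_ofReal (by linarith [(abs_le.1 (hy n)).2])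
    have hlo : ENNReal.ofReal (n * κ - D) ≤ n * volume S := by
      rw [← hint, ← mul_one (ENNReal.ofReal (n * κ - D)), ← hcube, ← lintegral_const]
      refine lintegral_mono_ae (ae_restrict_of_ae ?_)
      filter_upwards [h] with y hy
      exact ENNReal.ofReal_le_ofReal (by linarith [(abs_le.1 (hy n)).1])
    have hpos : 0 ≤ n * κ + D := by
      obtain ⟨y, hy⟩ := h.exists
      have := Finset.sum_nonneg fun k (_ : k ∈ Finset.range n) => multFn_nonneg S (y + (k : ℝ) • β)
      linarith [(abs_le.1 (hy n)).2]
    have h1 := ENNReal.toReal_le_of_le_ofReal hpos hup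
    have h2 := (ENNReal.ofReal_le_iff_le_toReal
      (ENNReal.mul_ne_top (ENNReal.natCast_ne_top n) hfin)).1 hlo
    simp only [ENNReal.toReal_mul, ENNReal.toReal_natCast] at h1 h2
    exact abs_le.2 ⟨by linarith, by linarith⟩
  refine ⟨D + D, ?_⟩
  filter_upwards [h] with y hy n _
  have := abs_add_le ((∑ k ∈ Finset.range n, multFn S (y + (k : ℝ) • β)) - n * κ)
    (n * κ - n * (volume S).toReal)
  rw [sub_add_sub_cancel] at this
  exact this.trans (add_le_add (hy n) (hvol n))

/-- An inclusion `T(ℤα + ℤ^d) ⊆ ℤβ + ℤ^d` is given in the coordinates `ℤ × ℤ^d` by an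
injective integer matrix. -/
lemma exists_lift {d : ℕ} (hd : 1 ≤ d) {α β : Fin d → ℝ}
    (hα : IsIrrationalVector α) (hβ : IsIrrationalVector β)
    (T : (Fin d → ℝ) ≃ₗ[ℝ] (Fin d → ℝ)) (hT : ∀ v ∈ lat α, T v ∈ lat β) :
    ∃ A : (ℤ × (Fin d → ℤ)) →ₗ[ℤ] (ℤ × (Fin d → ℤ)),
      Function.Injective A ∧ ∀ g, proj β (A g) = T (proj α g) := by
  have h : ∀ g, ∃ h, proj β h = T (proj α g) := fun g =>
    mem_lat_iff.1 (hT _ (proj_mem_lat α g))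
  choose A hA using h
  let A' : (ℤ × (Fin d → ℤ)) →+ (ℤ × (Fin d → ℤ)) := AddMonoidHom.mk' A fun g h =>
    proj_injective hd hβ (by rw [proj_add, hA, hA, hA, proj_add, map_add])
  refine ⟨A'.toIntLinearMap, fun g h hgh => proj_injective hd hα (T.injective ?_), hA⟩
  rw [← hA, ← hA]
  exact congrArg _ hgh

/-- The height of `A g`, expressed through the height of `g` and the projection of `g`. The
coefficient `c` of the height of `g` is non-zero: otherwise irrationality of `α` would make `A`
take values in the hyperplane of height `0`, against injectivity. -/
lemma exists_height {d : ℕ} {α : Fin d → ℝ} (hα : IsIrrationalVector α)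
    (A : (ℤ × (Fin d → ℤ)) →ₗ[ℤ] (ℤ × (Fin d → ℤ))) (hA : Function.Injective A) :
    ∃ (c : ℝ) (a : Fin d → ℝ), c ≠ 0 ∧
      ∀ g, ((A g).1 : ℝ) = c * g.1 + ∑ i, a i * proj α g i := by
  set b : ℤ := (A (1, 0)).1 with hb
  set a : Fin d → ℤ := fun i => (A (0, Pi.single i 1)).1 with ha
  have hfst : ∀ g, (A g).1 = b * g.1 + ∑ i, a i * g.2 i := by
    intro g
    have e : g = g.1 • ((1, 0) : ℤ × (Fin d → ℤ)) +
        ∑ i, g.2 i • ((0, Pi.single i 1) : ℤ × (Fin d → ℤ)) := by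
      refine Prod.ext ?_ ?_
      · simp [Prod.fst_sum]
      · ext j
        simp [Prod.snd_sum, Finset.sum_apply, Pi.single_apply]
    conv_lhs => rw [e]
    simp only [map_add, map_sum, map_smul, Prod.fst_add, Prod.fst_sum, Prod.smul_fst, smul_eq_mul,
      hb, ha]
    rw [mul_comm]
    congr 1
    exact Finset.sum_congr rfl fun i _ => mul_comm _ _
  refine ⟨b - ∑ i, a i * α i, fun i => a i, ?_, ?_⟩
  · intro hc
    have h0 := hα b (-a) (by
      rw [← hc, sub_eq_add_neg, ← Finset.sum_neg_distrib]
      simp)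
    have hzero : ∀ g, (A g).1 = 0 := by
      intro g
      have ha0 : ∀ i, a i = 0 := fun i => by simpa using congrFun h0.2 i
      rw [hfst, h0.1]
      simp [ha0]
    have hinj : Function.Injective ((LinearMap.snd ℤ ℤ (Fin d → ℤ)).comp A) := by
      intro g h hgh
      exact hA (Prod.ext (by rw [hzero, hzero]) hgh)
    have := LinearMap.finrank_le_finrank_of_injective hinj
    simp at this
  · intro g
    rw [hfst]
    simp only [proj, zc, Pi.add_apply, Pi.smul_apply, smul_eq_mul]
    push_cast
    rw [sub_mul, Finset.sum_mul, sub_add_eq_add_sub, add_sub_assoc, ← Finset.sum_sub_distrib]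
    congr 1
    refine Finset.sum_congr rfl fun i _ => ?_
    ring

lemma ae_comp_linear {d : ℕ} (T : (Fin d → ℝ) ≃ₗ[ℝ] (Fin d → ℝ)) (w : Fin d → ℝ)
    {P : (Fin d → ℝ) → Prop} (h : ∀ᵐ x, P x) : ∀ᵐ y, P (T.symm (y + w)) := by
  have h1 : ∀ᵐ y, P (T.symm y) := by
    have e : {y | ¬ P (T.symm y)} =
        (T : (Fin d → ℝ) →ₗ[ℝ] (Fin d → ℝ)) '' {x | ¬ P x} := by
      ext y
      exact ⟨fun hy => ⟨T.symm y, hy, T.apply_symm_apply y⟩, by rintro ⟨x, hx, rfl⟩; simpa using hx⟩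
    rw [ae_iff, e, Measure.addHaar_image_linearMap, ae_iff.1 h, mul_zero]
  exact (measurePreserving_add_right volume w).quasiMeasurePreserving.ae h1

/-- With `A` the lift of `T`, the points counted for `T '' S` split over the finitely many cosets of
the image of `A`. Over the coset of `r`, they correspond to points `g` over a translate of `S` for
which the height of `r + A g` lies in `[0, n)`. Since `S` is bounded, this is a condition on the
height of `g` up to a bounded error. -/
lemma isBRS_image_of_lat {d : ℕ} (hd : 1 ≤ d) {α β : Fin d → ℝ}
    (hα : IsIrrationalVector α) (hβ : IsIrrationalVector β)
    (T : (Fin d → ℝ) ≃ₗ[ℝ] (Fin d → ℝ)) (hT : ∀ v ∈ lat α, T v ∈ lat β)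
    {S : Set (Fin d → ℝ)} (hS : IsRiemannMeasurable S) (hBRS : IsBRS α S) :
    IsBRS β (T '' S) := by
  classical
  obtain ⟨A, hAinj, hA⟩ := exists_lift hd hα hβ T hT
  obtain ⟨c, a, hc, hheight⟩ := exists_height hα A hAinj
  obtain ⟨C, hC⟩ := hBRS.hits_bound hS.1
  obtain ⟨M, hM⟩ := hS.1.exists_norm_le
  set L := (volume S).toReal with hL
  have : Finite ((ℤ × (Fin d → ℤ)) ⧸ LinearMap.range A) :=
    Submodule.finiteQuotientOfFreeOfRankEq _ (LinearMap.finrank_range_of_inj hAinj)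
  have := Fintype.ofFinite ((ℤ × (Fin d → ℤ)) ⧸ LinearMap.range A)
  set Q := (ℤ × (Fin d → ℤ)) ⧸ LinearMap.range A
  let r : Q → ℤ × (Fin d → ℤ) := fun q => Quotient.out q
  have hr : ∀ q, (Submodule.Quotient.mk (r q) : Q) = q := fun q => Quotient.out_eq q
  set R : ℝ := ∑ i, |a i| * |M| with hRdef
  have hR : 0 ≤ R := Finset.sum_nonneg fun i _ => by positivity
  have hdot : ∀ s ∈ S, |∑ i, a i * s i| ≤ R := by
    intro s hs
    refine (Finset.abs_sum_le_sum_abs _ _).trans (Finset.sum_le_sum fun i _ => ?_)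
    rw [abs_mul]
    exact mul_le_mul_of_nonneg_left
      (((norm_le_pi_norm s i).trans (hM s hs)).trans (le_abs_self M)) (abs_nonneg _)
  refine isBRS_of_linear_growth (isBounded_image_linear T hS.1)
    (hS.image_linear T).nullMeasurableSet (κ := ∑ _q : Q, L / |c|)
    (D := ∑ _q : Q, (C + L * (2 * R / |c| + 1))) ?_
  filter_upwards [ae_all_iff.2 fun q : Q => ae_comp_linear T (proj β (r q)) hC] with y hy n
  let E : Q → Set (ℤ × (Fin d → ℤ)) := fun q =>
    {g | 0 ≤ (r q + A g).1 ∧ (r q + A g).1 < 0 + (n : ℤ) ∧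
      T.symm (y + proj β (r q)) + proj α g ∈ S}
  have hmem : ∀ q g, T.symm (y + proj β (r q)) + proj α g ∈ S ↔
      y + proj β (r q + A g) ∈ T '' S := by
    intro q g
    have : T (T.symm (y + proj β (r q)) + proj α g) = y + proj β (r q + A g) := by
      rw [map_add, LinearEquiv.apply_symm_apply, proj_add, hA, add_assoc]
    rw [← this]
    exact T.injective.mem_set_image.symm
  have hE : ∀ q, (E q).Finite ∧
      |((E q).ncard : ℝ) - n * (L / |c|)| ≤ C + L * (2 * R / |c| + 1) := by
    intro q
    set x := T.symm (y + proj β (r q)) with hxdef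
    -- With `s = x + proj α g`, the height of `r q + A g` is `c * g.1 + a ⬝ s` up to a constant.
    have key : ∀ g, (((r q + A g).1 : ℤ) : ℝ) - n / 2 =
        (c * g.1 - (∑ i, a i * x i - (r q).1 + n / 2)) + ∑ i, a i * (x + proj α g) i := by
      intro g
      rw [Prod.fst_add, Int.cast_add, hheight]
      simp only [Pi.add_apply, mul_add, Finset.sum_add_distrib]
      ring
    refine ncard_slab hS.1 ENNReal.toReal_nonneg (hy q) hc hR n
      (t := ∑ i, a i * x i - (r q).1 + n / 2) ?_ ?_
    · rintro g ⟨h1, h2, h3⟩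
      refine ⟨h3, ?_⟩
      have h1' : (0 : ℝ) ≤ ((r q + A g).1 : ℤ) := by exact_mod_cast h1
      have h2' : (((r q + A g).1 : ℤ) : ℝ) < n := by rw [zero_add] at h2; exact_mod_cast h2
      have h4 := abs_le.1 (hdot _ h3)
      have h5 := key g
      rw [abs_le]
      constructor <;> linarith
    · intro g h3 h
      have h4 := abs_le.1 (hdot _ h3)
      have h5 := key g
      rw [abs_lt] at h
      have h1' : (0 : ℝ) ≤ ((r q + A g).1 : ℤ) := by linarith
      have h2' : (((r q + A g).1 : ℤ) : ℝ) < n := by linarith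
      exact ⟨by exact_mod_cast h1', by rw [zero_add]; exact_mod_cast h2', h3⟩
  let F : (Σ q : Q, E q) → hits β (T '' S) y 0 n := fun p =>
    ⟨r p.1 + A p.2.1, p.2.2.1, p.2.2.2.1, (hmem _ _).1 p.2.2.2.2⟩
  have hmk : ∀ (q : Q) g, (Submodule.Quotient.mk (r q + A g) : Q) = q := by
    intro q g
    rw [Submodule.Quotient.mk_add, hr,
      (Submodule.Quotient.mk_eq_zero _).2 (LinearMap.mem_range_self A g), add_zero]
  have hF : Function.Bijective F := by
    constructor
    · rintro ⟨q, g, hg⟩ ⟨q', g', hg'⟩ h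
      have h' : r q + A g = r q' + A g' := congrArg Subtype.val h
      obtain rfl : q = q' := by rw [← hmk q g, h', hmk]
      obtain rfl : g = g' := hAinj (add_left_cancel h')
      rfl
    · rintro ⟨g', h1, h2, h3⟩
      obtain ⟨g, hg⟩ : g' - r (Submodule.Quotient.mk g') ∈ LinearMap.range A := by
        rw [← Submodule.Quotient.mk_eq_zero, Submodule.Quotient.mk_sub, hr, sub_self]
      have e : r (Submodule.Quotient.mk g') + A g = g' := by rw [hg]; abel
      refine ⟨⟨Submodule.Quotient.mk g', g, ?_, ?_, ?_⟩, Subtype.ext e⟩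
      · rw [e]; exact h1
      · rw [e]; exact h2
      · rw [hmem, e]; exact h3
  have hcount : ((hits β (T '' S) y 0 n).ncard : ℝ) = ∑ q, ((E q).ncard : ℝ) := by
    have : ∀ q, Finite (E q) := fun q => (hE q).1
    rw [← Nat.card_coe_set_eq, ← Nat.card_congr (Equiv.ofBijective F hF), Nat.card_sigma]
    push_cast
    rfl
  have hsum := (finite_hits_and_ncard β (isBounded_image_linear T hS.1) y 0 n).2
  simp only [Int.cast_zero, zero_smul, add_zero] at hsum
  rw [← hsum, hcount, Finset.mul_sum, ← Finset.sum_sub_distrib]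
  exact (Finset.abs_sum_le_sum_abs _ _).trans (Finset.sum_le_sum fun q _ => (hE q).2)

/-! ### Exchanging a small piece of the cube with a translate -/

/-- Birkhoff sum, along the rotation by `β`, of the difference between the multiplicity functions
of `B` and of its translate `B + v`. -/
noncomputable def swapSum {d : ℕ} (β v : Fin d → ℝ) (B : Set (Fin d → ℝ)) (n : ℕ)
    (x : Fin d → ℝ) : ℝ :=
  ∑ k ∈ Finset.range n, (multFn B (x + (k : ℝ) • β) - multFn B (x + (k : ℝ) • β - v))

lemma swapSum_union {d : ℕ} (β v : Fin d → ℝ) {A B : Set (Fin d → ℝ)}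
    (hA : Bornology.IsBounded A) (hB : Bornology.IsBounded B) (h : Disjoint A B) (n : ℕ)
    (x : Fin d → ℝ) : swapSum β v (A ∪ B) n x = swapSum β v A n x + swapSum β v B n x := by
  simp only [swapSum, multFn_union hA hB h]
  rw [← Finset.sum_add_distrib]
  exact Finset.sum_congr rfl fun _ _ => by ring

lemma telescope_nat (f : ℤ → ℝ) (h0 : ∀ k, 0 ≤ f k) (h1 : ∀ k, f k ≤ 1) (n q : ℕ) :
    |∑ k ∈ Finset.range n, (f (k - q) - f k)| ≤ q := by
  induction q with
  | zero => simp
  | succ q ih =>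
    have e : ∑ k ∈ Finset.range n, (f (k - (q + 1 : ℕ)) - f k) =
        (f (-1 - q) - f (n - 1 - q)) + ∑ k ∈ Finset.range n, (f (k - q) - f k) := by
      have := Finset.sum_range_sub' (fun k : ℕ => f (k - 1 - q)) n
      simp only [Nat.cast_zero, zero_sub] at this
      rw [← this, ← Finset.sum_add_distrib]
      refine Finset.sum_congr rfl fun k _ => ?_
      push_cast
      rw [show (k : ℤ) - (q + 1) = k - 1 - q by ring, show (k : ℤ) + 1 - 1 - q = k - q by ring]
      ring
    rw [e]
    refine (abs_add_le _ _).trans ?_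
    have : |f (-1 - q) - f (n - 1 - q)| ≤ 1 := by
      rw [abs_le]
      constructor <;> linarith [h0 (-1 - q), h1 (-1 - q), h0 (n - 1 - q), h1 (n - 1 - q)]
    push_cast
    linarith

lemma telescope_int (f : ℤ → ℝ) (h0 : ∀ k, 0 ≤ f k) (h1 : ∀ k, f k ≤ 1) (n : ℕ) (q : ℤ) :
    |∑ k ∈ Finset.range n, (f (k - q) - f k)| ≤ |(q : ℝ)| := by
  obtain ⟨m, rfl | rfl⟩ := q.eq_nat_or_neg
  · simpa using telescope_nat f h0 h1 n m
  · have := telescope_nat (fun k => f (k + m)) (fun k => h0 _) (fun k => h1 _) n m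
    rw [← abs_neg, ← Finset.sum_neg_distrib]
    simpa using this

lemma multFn_le_one {d : ℕ} {A : Set (Fin d → ℝ)} (hA : A ⊆ cube d) (x : Fin d → ℝ) :
    multFn A x ≤ 1 := by
  have h := multFn_union ((isBounded_cube d).subset hA)
    ((isBounded_cube d).subset (Set.sdiff_subset (s := cube d) (t := A))) Set.disjoint_sdiff_right x
  rw [Set.union_sdiff_cancel hA, multFn_cube] at h
  linarith [multFn_nonneg (cube d \ A) x]

/-- The unit cube with the piece `A` moved by `γ`. -/
def exchange {d : ℕ} (A : Set (Fin d → ℝ)) (γ : Fin d → ℝ) : Set (Fin d → ℝ) :=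
  (cube d \ A) ∪ (fun y => y + γ) '' A

lemma disjoint_exchange {d : ℕ} {A : Set (Fin d → ℝ)} (hA : A ⊆ cube d) {γ : Fin d → ℝ}
    (hγ : 1 ≤ ‖γ‖) : Disjoint (cube d \ A) ((fun y => y + γ) '' A) := by
  refine Set.disjoint_left.2 ?_
  rintro _ ⟨h1, -⟩ ⟨y, hy, rfl⟩
  refine absurd hγ (not_le.2 ((pi_norm_lt_iff one_pos).2 fun i => ?_))
  have h2 := h1 i trivial
  have h3 := hA hy i trivial
  simp only [Pi.add_apply, Set.mem_Ico] at h2 h3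
  rw [Real.norm_eq_abs, abs_lt]
  constructor <;> linarith

lemma isRiemannMeasurable_exchange {d : ℕ} {A : Set (Fin d → ℝ)} (hA : IsRiemannMeasurable A)
    (γ : Fin d → ℝ) : IsRiemannMeasurable (exchange A γ) :=
  ((isRiemannMeasurable_cube d).diff hA).union (hA.translate γ)

lemma volume_exchange {d : ℕ} {A : Set (Fin d → ℝ)} (hA : IsRiemannMeasurable A)
    (hAc : A ⊆ cube d) {γ : Fin d → ℝ} (hγ : 1 ≤ ‖γ‖) : volume (exchange A γ) = 1 := by
  rw [exchange, measure_union₀ (hA.translate γ).nullMeasurableSet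
      (disjoint_exchange hAc hγ).aedisjoint,
    Set.image_add_right, measure_preimage_add_right, ← volume_cube d,
    ← measure_union₀ hA.nullMeasurableSet Set.disjoint_sdiff_left.aedisjoint,
    Set.sdiff_union_of_subset hAc]

/-- Moving a piece of the cube by a vector of `ℤα + ℤ^d` changes the constant multiplicity
function of the cube by a coboundary. -/
lemma isBRS_exchange {d : ℕ} {α : Fin d → ℝ} {A : Set (Fin d → ℝ)} (hA : IsRiemannMeasurable A)
    (hAc : A ⊆ cube d) {γ : Fin d → ℝ} (hγ : 1 ≤ ‖γ‖) (hlat : γ ∈ lat α) :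
    IsBRS α (exchange A γ) := by
  obtain ⟨⟨q, p⟩, rfl⟩ := mem_lat_iff.1 hlat
  refine ⟨|(q : ℝ)|, Filter.Eventually.of_forall fun x n _ => ?_⟩
  have h1 : ∀ y, multFn (exchange A (proj α (q, p))) y - 1 =
      multFn A (y - proj α (q, p)) - multFn A y := by
    intro y
    rw [exchange, multFn_union ((isRiemannMeasurable_cube d).diff hA).1 (hA.translate _).1
      (disjoint_exchange hAc hγ), multFn_translate, ← multFn_cube y]
    have := multFn_union ((isRiemannMeasurable_cube d).diff hA).1 hA.1 Set.disjoint_sdiff_left y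
    rw [Set.sdiff_union_of_subset hAc] at this
    linarith
  have h2 : ∀ k : ℕ, multFn A (x + (k : ℝ) • α - proj α (q, p)) =
      multFn A (x + (((k : ℤ) - q : ℤ) : ℝ) • α) := by
    intro k
    have e : x + (k : ℝ) • α - proj α (q, p) + zc p = x + (((k : ℤ) - q : ℤ) : ℝ) • α := by
      rw [proj, Int.cast_sub, Int.cast_natCast, sub_smul]
      abel
    rw [← multFn_add_zc A _ p, e]
  rw [disc, volume_exchange hA hAc hγ, ENNReal.toReal_one]
  have h3 : (∑ k ∈ Finset.range n, multFn (exchange A (proj α (q, p))) (x + (k : ℝ) • α)) - n * 1 =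
      ∑ k ∈ Finset.range n, (multFn A (x + (((k : ℤ) - q : ℤ) : ℝ) • α) -
        multFn A (x + ((k : ℤ) : ℝ) • α)) := by
    rw [show (n : ℝ) * 1 = ∑ k ∈ Finset.range n, (1 : ℝ) by simp, ← Finset.sum_sub_distrib]
    refine Finset.sum_congr rfl fun k _ => ?_
    rw [h1, h2, Int.cast_natCast]
  rw [h3]
  exact telescope_int (fun k => multFn A (x + (k : ℝ) • α)) (fun _ => multFn_nonneg _ _)
    (fun _ => multFn_le_one hAc _) n q

/-- If `T` preserves the bounded remainder property, then comparing the images of the cube and of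
the exchanged cube shows that the difference of the multiplicity functions of `B` and `B + Tγ` has
bounded Birkhoff sums. -/
lemma swapSum_bounded {d : ℕ} {α β : Fin d → ℝ} (T : (Fin d → ℝ) ≃ₗ[ℝ] (Fin d → ℝ))
    (H : ∀ S : Set (Fin d → ℝ), IsRiemannMeasurable S → IsBRS α S → IsBRS β (T '' S))
    {γ : Fin d → ℝ} (hγ : 1 ≤ ‖γ‖) (hlat : γ ∈ lat α) {B : Set (Fin d → ℝ)}
    (hB : IsRiemannMeasurable B) (hBc : B ⊆ T '' cube d) :
    ∃ C : ℝ, ∀ᵐ x : Fin d → ℝ, ∀ n : ℕ, 1 ≤ n → |swapSum β (T γ) B n x| ≤ C := by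
  set A := T.symm '' B with hAdef
  have hTA : T '' A = B := by
    rw [hAdef, ← Set.image_comp]; simp
  have hA : IsRiemannMeasurable A := hB.image_linear T.symm
  have hAc : A ⊆ cube d := by
    rintro _ ⟨y, hy, rfl⟩
    obtain ⟨z, hz, rfl⟩ := hBc hy
    simpa using hz
  clear_value A
  have hdiff := (isRiemannMeasurable_cube d).diff hA
  have hcubeBRS : IsBRS α (cube d) :=
    ⟨0, Filter.Eventually.of_forall fun x n _ => by simp [disc, multFn_cube, volume_cube]⟩
  obtain ⟨C₁, hC₁⟩ := H _ (isRiemannMeasurable_cube d) hcubeBRS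
  obtain ⟨C₂, hC₂⟩ := H _ (isRiemannMeasurable_exchange hA γ) (isBRS_exchange hA hAc hγ hlat)
  have hvol : volume (T '' exchange A γ) = volume (T '' cube d) := by
    change volume ((T : (Fin d → ℝ) →ₗ[ℝ] (Fin d → ℝ)) '' _) =
      volume ((T : (Fin d → ℝ) →ₗ[ℝ] (Fin d → ℝ)) '' _)
    rw [Measure.addHaar_image_linearMap, Measure.addHaar_image_linearMap,
      volume_exchange hA hAc hγ, volume_cube]
  have h1 : ∀ y, multFn (T '' cube d) y - multFn (T '' exchange A γ) y =
      multFn B y - multFn B (y - T γ) := by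
    intro y
    have e1 := multFn_union (isBounded_image_linear T hdiff.1) (isBounded_image_linear T hA.1)
      ((Set.disjoint_image_iff T.injective).2 Set.disjoint_sdiff_left) y
    rw [← Set.image_union, Set.sdiff_union_of_subset hAc, hTA] at e1
    have e2 := multFn_union (isBounded_image_linear T hdiff.1)
      (isBounded_image_linear T (hA.translate _).1)
      ((Set.disjoint_image_iff T.injective).2 (disjoint_exchange hAc hγ)) y
    have e3 : T '' ((fun y => y + γ) '' A) = (fun y => y + T γ) '' B := by
      rw [← hTA, ← Set.image_comp, ← Set.image_comp]
      exact Set.image_congr fun z _ => map_add T z γ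
    rw [← Set.image_union, e3, multFn_translate] at e2
    rw [e1, exchange, e2]
    ring
  refine ⟨C₁ + C₂, ?_⟩
  filter_upwards [hC₁, hC₂] with x hx₁ hx₂ n hn
  have h2 : swapSum β (T γ) B n x = disc β (T '' cube d) n x - disc β (T '' exchange A γ) n x := by
    rw [disc, disc, hvol, swapSum, sub_sub_sub_cancel_right, ← Finset.sum_sub_distrib]
    exact Finset.sum_congr rfl fun k _ => (h1 _).symm
  rw [h2]
  exact (abs_sub _ _).trans (add_le_add (hx₁ n hn) (hx₂ n hn))

/-! ### Concentrating orbit visits near a point -/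

/-- Rotations of the torus are recurrent: `kβ` is close to `ℤ^d` for as many `k` as desired. -/
lemma exists_returns {d : ℕ} (β : Fin d → ℝ) {ε : ℝ} (hε : 0 < ε) (N : ℕ) :
    ∃ K : Finset ℕ, K.card = N ∧ ∀ k ∈ K, ∃ z : Fin d → ℤ, ‖(k : ℝ) • β + zc z‖ < ε := by
  let u : ℕ → Fin d → ℝ := fun k i => Int.fract ((k : ℝ) * β i)
  have hu : ∀ k, u k ∈ Set.Icc (0 : Fin d → ℝ) 1 := fun k =>
    ⟨fun i => Int.fract_nonneg _, fun i => (Int.fract_lt_one _).le⟩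
  obtain ⟨a, -, φ, hφ, hlim⟩ := isCompact_Icc.tendsto_subseq hu
  obtain ⟨m, hm⟩ := Metric.cauchySeq_iff'.1 hlim.cauchySeq ε hε
  have hinf : {k : ℕ | ∃ z : Fin d → ℤ, ‖(k : ℝ) • β + zc z‖ < ε}.Infinite := by
    refine Set.infinite_of_injective_forall_mem (f := fun j => φ (m + j) - φ m) ?_ ?_
    · intro j j' h
      have h1 := hφ.monotone (Nat.le_add_right m j)
      have h2 := hφ.monotone (Nat.le_add_right m j')
      have h3 : φ (m + j) = φ (m + j') := by
        simp only at h
        omega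
      have := hφ.injective h3
      omega
    · intro j
      have h1 := hφ.monotone (Nat.le_add_right m j)
      refine ⟨fun i => ⌊(φ m : ℝ) * β i⌋ - ⌊(φ (m + j) : ℝ) * β i⌋, ?_⟩
      have h2 := hm (m + j) (Nat.le_add_right m j)
      rw [dist_eq_norm] at h2
      have e : ((φ (m + j) - φ m : ℕ) : ℝ) • β +
          zc (fun i => ⌊(φ m : ℝ) * β i⌋ - ⌊(φ (m + j) : ℝ) * β i⌋) =
          (u ∘ φ) (m + j) - (u ∘ φ) m := by
        ext i
        simp only [zc, Pi.add_apply, Pi.sub_apply, Pi.smul_apply, smul_eq_mul, Function.comp, u,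
          Int.fract, Nat.cast_sub h1, Int.cast_sub]
        ring
      rwa [e]
  obtain ⟨K, hK, hc⟩ := hinf.exists_subset_card_eq N
  exact ⟨K, hc, fun k hk => hK hk⟩

lemma eventually_far {d : ℕ} {u : Fin d → ℝ} (hu : ∀ z, u ≠ zc z) :
    ∀ᶠ r in nhdsWithin (0 : ℝ) (Set.Ioi 0), ∀ z, 2 * r ≤ ‖u + zc z‖ := by
  have : ∃ i, u i ≠ (round (u i) : ℝ) := by
    by_contra! h
    exact hu (fun i => round (u i)) (funext h)
  obtain ⟨i, hi⟩ := this
  have hpos : 0 < |u i - round (u i)| := abs_pos.2 (sub_ne_zero.2 hi)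
  filter_upwards [Ioo_mem_nhdsGT (half_pos hpos)] with r hr z
  have h1 := round_le (u i) (-z i)
  have h2 : |u i + z i| ≤ ‖u + zc z‖ := norm_le_pi_norm (u + zc z) i
  have h3 := hr.2
  push_cast at h1
  rw [sub_neg_eq_add] at h1
  linarith

lemma countable_lat {d : ℕ} (β : Fin d → ℝ) : (lat β).Countable := by
  have : lat β = Set.range (proj β) := by
    ext v; rw [mem_lat_iff, Set.mem_range]
  rw [this]
  exact Set.countable_range _

/-- If `v ∉ ℤβ + ℤ^d`, the returns of an orbit to a neighbourhood of `p` can be collected in a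
small set `B'` whose translate by `v` is not visited; this gives a Birkhoff sum of size `N`, which
is insensitive to changes of `B'` very close to `p`. -/
lemma exists_hump {d : ℕ} (hd : 1 ≤ d) {β v : Fin d → ℝ} (hv : v ∉ lat β) (p : Fin d → ℝ)
    {δ : ℝ} (hδ : 0 < δ) (N : ℕ) :
    ∃ (B' : Set (Fin d → ℝ)) (r : ℝ) (n : ℕ) (W : Set (Fin d → ℝ)),
      IsRiemannMeasurable B' ∧ B' ⊆ Metric.ball p δ ∧ 0 < r ∧ r ≤ δ / 2 ∧
      Disjoint B' (Metric.ball p r) ∧ 1 ≤ n ∧ volume W ≠ 0 ∧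
      ∀ x ∈ W, (N : ℝ) ≤ swapSum β v B' n x ∧
        ∀ R ⊆ Metric.ball p r, swapSum β v R n x = 0 := by
  have : Nonempty (Fin d) := ⟨⟨0, hd⟩⟩
  -- A base point whose orbit avoids `p` and `p + v` modulo `ℤ^d`; all but countably many qualify.
  obtain ⟨x₀, hx₀, hx₁, hx₂⟩ : ∃ x₀ ∈ Metric.ball p (δ / 2), x₀ - p ∉ lat β ∧
      x₀ - v - p ∉ lat β := by
    have hc : ((fun y => y + p) '' lat β ∪ (fun y => y + (v + p)) '' lat β).Countable :=
      ((countable_lat β).image _).union ((countable_lat β).image _)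
    have h0 : volume (Metric.ball p (δ / 2)) ≠ 0 :=
      (Metric.measure_ball_pos volume p (half_pos hδ)).ne'
    have : ∃ x ∈ Metric.ball p (δ / 2),
        x ∉ (fun y => y + p) '' lat β ∪ (fun y => y + (v + p)) '' lat β := by
      by_contra! h
      exact h0 (measure_mono_null h (hc.measure_zero volume))
    obtain ⟨x, hx, hx'⟩ := this
    refine ⟨x, hx, fun h => hx' (Or.inl ⟨_, h, by simp⟩), fun h => hx' (Or.inr ⟨_, h, ?_⟩)⟩
    simp only
    abel
  obtain ⟨K, hKc, hK⟩ := exists_returns β (half_pos hδ) N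
  choose! z hz using hK
  set a : ℕ → Fin d → ℝ := fun k => x₀ + (k : ℝ) • β + zc (z k) with ha
  set n := K.sup id + 1 with hn
  have hKn : ∀ k ∈ K, k ∈ Finset.range n := fun k hk =>
    Finset.mem_range.2 (Nat.lt_succ_of_le (Finset.le_sup (f := id) hk))
  have hlat : ∀ {w : Fin d → ℝ} (q : ℤ) (m : Fin d → ℤ), w = (q : ℝ) • β + zc m → w ∈ lat β :=
    fun q m h => ⟨q, m, h⟩
  have hak : ∀ k ∈ K, ‖a k - p‖ < δ := by
    intro k hk
    have e : a k - p = (x₀ - p) + ((k : ℝ) • β + zc (z k)) := by simp only [ha]; abel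
    rw [e]
    have h1 := hz k hk
    have h2 : ‖x₀ - p‖ < δ / 2 := by rwa [← dist_eq_norm]
    linarith [norm_add_le (x₀ - p) ((k : ℝ) • β + zc (z k))]
  have E1 : ∀ᶠ r in nhdsWithin (0 : ℝ) (Set.Ioi 0), ∀ k ∈ K, ‖a k - p‖ + r ≤ δ := by
    rw [Filter.eventually_all_finset]
    intro k hk
    filter_upwards [Ioo_mem_nhdsGT (sub_pos.2 (hak k hk))] with r hr
    linarith [hr.2]
  have E2 : ∀ᶠ r in nhdsWithin (0 : ℝ) (Set.Ioi 0), ∀ k ∈ Finset.range n,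
      ∀ w, 2 * r ≤ ‖x₀ + (k : ℝ) • β - p + zc w‖ := by
    rw [Filter.eventually_all_finset]
    intro k _
    refine eventually_far fun m h => hx₁ (hlat (-k) m ?_)
    rw [← h]; push_cast; rw [neg_smul]; abel
  have E3 : ∀ᶠ r in nhdsWithin (0 : ℝ) (Set.Ioi 0), ∀ k ∈ Finset.range n,
      ∀ w, 2 * r ≤ ‖x₀ + (k : ℝ) • β - v - p + zc w‖ := by
    rw [Filter.eventually_all_finset]
    intro k _
    refine eventually_far fun m h => hx₂ (hlat (-k) m ?_)
    rw [← h]; push_cast; rw [neg_smul]; abel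
  have E4 : ∀ᶠ r in nhdsWithin (0 : ℝ) (Set.Ioi 0), ∀ k ∈ Finset.range n, ∀ j ∈ K,
      ∀ w, 2 * r ≤ ‖x₀ + (k : ℝ) • β - v - a j + zc w‖ := by
    rw [Filter.eventually_all_finset]
    intro k _
    rw [Filter.eventually_all_finset]
    intro j _
    refine eventually_far fun m h => hv (hlat (k - j) (-(m + z j)) ?_)
    rw [zc_neg, zc_add, ← h]; push_cast; rw [sub_smul]; simp only [ha]; abel
  obtain ⟨r, hr1, hr2, hr3, hr4, hr5⟩ :=
    (E1.and (E2.and (E3.and (E4.and (Ioo_mem_nhdsGT (half_pos hδ)))))).exists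
  have hr0 : 0 < r := hr5.1
  have key : ∀ {x y c : Fin d → ℝ}, x ∈ Metric.ball x₀ r → x + y ∈ Metric.ball c r →
      ‖x₀ + y - c‖ < 2 * r := by
    intro x y c hx hy
    rw [Metric.mem_ball, dist_eq_norm] at hx hy
    have e : x₀ + y - c = (x + y - c) - (x - x₀) := by abel
    rw [e]
    linarith [norm_sub_le (x + y - c) (x - x₀)]
  set B' := ⋃ k ∈ K, Metric.ball (a k) r with hB'
  have hB'b : IsRiemannMeasurable B' := isRiemannMeasurable_biUnion_ball K a r
  have hmem : ∀ {y}, y ∈ B' ↔ ∃ j ∈ K, y ∈ Metric.ball (a j) r := by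
    intro y; simp only [hB', Set.mem_iUnion, exists_prop]
  refine ⟨B', r, n, Metric.ball x₀ r, hB'b, ?_, hr0, hr5.2.le, ?_, Nat.le_add_left 1 _,
    (Metric.measure_ball_pos volume x₀ hr0).ne', ?_⟩
  · refine Set.iUnion₂_subset fun k hk => Metric.ball_subset_ball' ?_
    rw [dist_eq_norm]
    linarith [hr1 k hk]
  · refine Set.disjoint_iUnion₂_left.2 fun k hk => Metric.ball_disjoint_ball ?_
    rw [dist_eq_norm]
    have := hr2 k (hKn k hk) (z k)
    have e : a k - p = x₀ + (k : ℝ) • β - p + zc (z k) := by simp only [ha]; abel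
    rw [e]
    linarith
  intro x hx
  constructor
  · have h1 : ∀ k ∈ Finset.range n, multFn B' (x + (k : ℝ) • β - v) = 0 := by
      intro k hk
      refine multFn_eq_zero fun w hw => ?_
      obtain ⟨j, hj, hw⟩ := hmem.1 hw
      have e : x + (k : ℝ) • β - v + zc w = x + ((k : ℝ) • β - v + zc w) := by abel
      rw [e] at hw
      have h2 := key hx hw
      have e2 : x₀ + ((k : ℝ) • β - v + zc w) - a j = x₀ + (k : ℝ) • β - v - a j + zc w := by abel
      rw [e2] at h2
      exact absurd (hr4 k hk j hj w) (not_le.2 h2)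
    have h2 : ∀ k ∈ K, 1 ≤ multFn B' (x + (k : ℝ) • β) := by
      intro k hk
      refine one_le_multFn hB'b.1 (k := z k) (hmem.2 ⟨k, hk, ?_⟩)
      rw [Metric.mem_ball, dist_eq_norm] at hx ⊢
      have e : x + (k : ℝ) • β + zc (z k) - a k = x - x₀ := by simp only [ha]; abel
      rwa [e]
    calc (N : ℝ) = ∑ k ∈ K, (1 : ℝ) := by simp [hKc]
      _ ≤ ∑ k ∈ K, multFn B' (x + (k : ℝ) • β) := Finset.sum_le_sum h2
      _ ≤ ∑ k ∈ Finset.range n, multFn B' (x + (k : ℝ) • β) :=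
        Finset.sum_le_sum_of_subset_of_nonneg hKn fun _ _ _ => multFn_nonneg _ _
      _ = swapSum β v B' n x :=
        Finset.sum_congr rfl fun k hk => by rw [h1 k hk, sub_zero]
  · intro R hR
    refine Finset.sum_eq_zero fun k hk => ?_
    rw [multFn_eq_zero, multFn_eq_zero, sub_zero]
    · intro w hw
      have e : x + (k : ℝ) • β - v + zc w = x + ((k : ℝ) • β - v + zc w) := by abel
      have hw := hR hw
      rw [e] at hw
      have h2 := key hx hw
      have e2 : x₀ + ((k : ℝ) • β - v + zc w) - p = x₀ + (k : ℝ) • β - v - p + zc w := by abel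
      rw [e2] at h2
      exact absurd (hr3 k hk w) (not_le.2 h2)
    · intro w hw
      have hw := hR hw
      rw [add_assoc] at hw
      have h2 := key hx hw
      have e2 : x₀ + ((k : ℝ) • β + zc w) - p = x₀ + (k : ℝ) • β - p + zc w := by abel
      rw [e2] at h2
      exact absurd (hr2 k hk w) (not_le.2 h2)

/-! ### The gliding hump -/

/-- A stage `(s, r)` of the construction: a Riemann measurable set inside the ball of radius `δ`
around `p` that stays at distance at least `r` from `p`. -/
def IsStage {d : ℕ} (p : Fin d → ℝ) (δ : ℝ) (s : Set (Fin d → ℝ) × ℝ) : Prop :=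
  IsRiemannMeasurable s.1 ∧ s.1 ⊆ Metric.ball p δ ∧ Disjoint s.1 (Metric.ball p s.2) ∧
    0 < s.2 ∧ s.2 ≤ δ

/-- The stage `s'` adds to `s` points close to `p`, and every set that arises from `s'` by adding
points of its protected ball has a Birkhoff sum of size at least `i` on a non-null set that is
independent of the added points. -/
def IsNextStage {d : ℕ} (β v p : Fin d → ℝ) (i : ℕ) (s s' : Set (Fin d → ℝ) × ℝ) : Prop :=
  s.1 ⊆ s'.1 ∧ s'.1 ⊆ s.1 ∪ Metric.ball p s.2 ∧ s'.2 ≤ s.2 / 2 ∧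
    ∃ n : ℕ, 1 ≤ n ∧ ∃ W : Set (Fin d → ℝ), volume W ≠ 0 ∧ ∀ᵐ x : Fin d → ℝ, x ∈ W →
      ∀ R ⊆ Metric.ball p s'.2, (i : ℝ) ≤ swapSum β v (s'.1 ∪ R) n x

lemma exists_next {d : ℕ} (hd : 1 ≤ d) {β v p : Fin d → ℝ} {δ : ℝ} (hv : v ∉ lat β)
    (Hb : ∀ B, IsRiemannMeasurable B → B ⊆ Metric.ball p δ →
      ∃ C : ℝ, ∀ᵐ x : Fin d → ℝ, ∀ n : ℕ, 1 ≤ n → |swapSum β v B n x| ≤ C)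
    (i : ℕ) (s : Set (Fin d → ℝ) × ℝ) (hs : IsStage p δ s) :
    ∃ s', IsStage p δ s' ∧ IsNextStage β v p i s s' := by
  obtain ⟨h1, h2, h3, h4, h5⟩ := hs
  obtain ⟨C, hC⟩ := Hb s.1 h1 h2
  -- The new piece has to outweigh the bounded contribution of the old ones.
  obtain ⟨N, hN⟩ := exists_nat_ge (C + i)
  obtain ⟨B', r, n, W, hB', hB's, hr0, hr, hdisj, hn, hW, hWx⟩ := exists_hump hd hv p h4 N
  have hsub : Metric.ball p r ⊆ Metric.ball p s.2 := Metric.ball_subset_ball (by linarith)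
  have hd' : Disjoint (s.1 ∪ B') (Metric.ball p r) :=
    Disjoint.union_left (h3.mono_right hsub) hdisj
  refine ⟨(s.1 ∪ B', r), ⟨h1.union hB',
    Set.union_subset h2 (hB's.trans (Metric.ball_subset_ball h5)), hd', hr0, by
      change r ≤ δ
      linarith⟩, Set.subset_union_left, Set.union_subset_union_right _ hB's, hr, n, hn, W, hW, ?_⟩
  filter_upwards [hC] with x hx hxW R hR
  obtain ⟨h6, h7⟩ := hWx x hxW
  rw [swapSum_union β v (h1.1.union hB'.1) (Metric.isBounded_ball.subset hR)
    (hd'.mono_right hR), swapSum_union β v h1.1 hB'.1 (h3.mono_right hB's), h7 R hR]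
  have := (abs_le.1 (hx n hn)).1
  linarith

/-- A bounded set that agrees, off arbitrarily small neighbourhoods of `p`, with Riemann measurable
sets is Riemann measurable. -/
lemma isRiemannMeasurable_of_approx {d : ℕ} (hd : 1 ≤ d) {p : Fin d → ℝ} {B : Set (Fin d → ℝ)}
    (hB : Bornology.IsBounded B) {s : ℕ → Set (Fin d → ℝ)} {δ : ℕ → ℝ}
    (hs : ∀ i, IsRiemannMeasurable (s i)) (hδ : Filter.Tendsto δ Filter.atTop (nhds 0))
    (h1 : ∀ i, s i ⊆ B) (h2 : ∀ i, B ⊆ s i ∪ Metric.ball p (δ i)) : IsRiemannMeasurable B := by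
  have : Nonempty (Fin d) := ⟨⟨0, hd⟩⟩
  refine ⟨hB, measure_mono_null (t := {p} ∪ ⋃ i, frontier (s i)) ?_
    (measure_union_null (measure_singleton p) (measure_iUnion_null fun i => (hs i).2))⟩
  intro y hy
  by_cases hyp : y = p
  · exact Or.inl hyp
  obtain ⟨i, hi⟩ := (hδ.eventually_lt_const (dist_pos.2 hyp)).exists
  have hU : IsOpen (Metric.closedBall p (δ i))ᶜ := Metric.isClosed_closedBall.isOpen_compl
  have hyU : y ∈ (Metric.closedBall p (δ i))ᶜ := by simpa using hi
  have e : B ∩ (Metric.closedBall p (δ i))ᶜ = s i ∩ (Metric.closedBall p (δ i))ᶜ := by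
    ext w
    refine ⟨fun ⟨hw, hw'⟩ => ⟨?_, hw'⟩, fun ⟨hw, hw'⟩ => ⟨h1 i hw, hw'⟩⟩
    rcases h2 i hw with h | h
    · exact h
    · exact absurd (Metric.ball_subset_closedBall h) hw'
  have h3 := frontier_inter_open_inter (s := B) hU
  rw [e, frontier_inter_open_inter hU] at h3
  have h4 : y ∈ frontier (s i) ∩ (Metric.closedBall p (δ i))ᶜ := h3 ▸ ⟨hy, hyU⟩
  exact Or.inr (Set.mem_iUnion.2 ⟨i, h4.1⟩)

/-- Stages with humps of unbounded height accumulate at `p` to a single Riemann measurable set: if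
all Riemann measurable subsets of a ball have bounded Birkhoff sums of the
difference between their multiplicity functions and those of their translates by `v`, then
`v ∈ ℤβ + ℤ^d`. -/
lemma mem_lat_of_bounded {d : ℕ} (hd : 1 ≤ d) {β v p : Fin d → ℝ} {δ : ℝ} (hδ : 0 < δ)
    (Hb : ∀ B, IsRiemannMeasurable B → B ⊆ Metric.ball p δ →
      ∃ C : ℝ, ∀ᵐ x : Fin d → ℝ, ∀ n : ℕ, 1 ≤ n → |swapSum β v B n x| ≤ C) : v ∈ lat β := by
  by_contra hv
  have hnext := exists_next hd hv Hb
  choose! f hf1 hf2 using hnext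
  let σ : ℕ → Set (Fin d → ℝ) × ℝ := fun m => Nat.rec (∅, δ) (fun i s => f i s) m
  have hσ : ∀ i, σ (i + 1) = f i (σ i) := fun _ => rfl
  have hst : ∀ i, IsStage p δ (σ i) := by
    intro i
    induction i with
    | zero => exact ⟨by simp [σ, IsRiemannMeasurable], by simp [σ], by simp [σ], hδ, le_rfl⟩
    | succ i ih => rw [hσ]; exact hf1 i _ ih
  have hnx : ∀ i, IsNextStage β v p i (σ i) (σ (i + 1)) := fun i => by
    rw [hσ]; exact hf2 i _ (hst i)
  have hmono : Monotone fun i => (σ i).1 := monotone_nat_of_le_succ fun i => (hnx i).1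
  have hanti : Antitone fun i => (σ i).2 :=
    antitone_nat_of_succ_le fun i => by linarith [(hnx i).2.2.1, (hst i).2.2.2.1]
  have hgeo : ∀ i, (σ i).2 ≤ δ * (1 / 2) ^ i := by
    intro i
    induction i with
    | zero => simp [σ]
    | succ i ih =>
      rw [pow_succ]
      linarith [(hnx i).2.2.1]
  have hlim : Filter.Tendsto (fun i => (σ i).2) Filter.atTop (nhds 0) := by
    refine squeeze_zero (fun i => (hst i).2.2.2.1.le) hgeo ?_
    have := (tendsto_pow_atTop_nhds_zero_of_lt_one (r := (1 / 2 : ℝ)) (by norm_num)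
      (by norm_num)).const_mul δ
    simpa using this
  set B := ⋃ i, (σ i).1 with hBdef
  have hsub : ∀ i, (σ i).1 ⊆ B := fun i => Set.subset_iUnion (fun i => (σ i).1) i
  have htail : ∀ i j, (σ (i + j)).1 ⊆ (σ i).1 ∪ Metric.ball p (σ i).2 := by
    intro i j
    induction j with
    | zero => exact Set.subset_union_left
    | succ j ih =>
      refine ((hnx (i + j)).2.1).trans (Set.union_subset ih ?_)
      exact (Metric.ball_subset_ball (hanti (Nat.le_add_right i j))).trans Set.subset_union_right
  have hBi : ∀ i, B ⊆ (σ i).1 ∪ Metric.ball p (σ i).2 := fun i =>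
    Set.iUnion_subset fun j =>
      (hmono (Nat.le_add_left j i)).trans (htail i j)
  have hBb : B ⊆ Metric.ball p δ := Set.iUnion_subset fun i => (hst i).2.1
  have hBR : IsRiemannMeasurable B :=
    isRiemannMeasurable_of_approx hd (Metric.isBounded_ball.subset hBb) (fun i => (hst i).1)
      hlim hsub hBi
  obtain ⟨C, hC⟩ := Hb B hBR hBb
  obtain ⟨i, hi⟩ := exists_nat_gt C
  obtain ⟨-, -, -, n, hn, W, hW, hWx⟩ := hnx i
  obtain ⟨x, hxW, hx1, hx2⟩ := ((frequently_ae_mem_iff.2 hW).and_eventually (hC.and hWx)).exists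
  have h1 := hx2 hxW (B \ (σ (i + 1)).1) (Set.sdiff_subset_iff.2 (hBi (i + 1)))
  rw [Set.union_sdiff_cancel (hsub (i + 1))] at h1
  linarith [(abs_le.1 (hx1 n hn)).2]

lemma exists_ball_subset_image_cube {d : ℕ} (T : (Fin d → ℝ) ≃ₗ[ℝ] (Fin d → ℝ)) :
    ∃ (p : Fin d → ℝ) (δ : ℝ), 0 < δ ∧ Metric.ball p δ ⊆ T '' cube d := by
  have hopen : IsOpen (T '' Metric.ball (fun _ => (1 / 2 : ℝ)) (1 / 2)) :=
    T.toContinuousLinearEquiv.toHomeomorph.isOpenMap _ Metric.isOpen_ball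
  obtain ⟨δ, hδ, h⟩ := Metric.isOpen_iff.1 hopen _
    (Set.mem_image_of_mem T (Metric.mem_ball_self (by norm_num)))
  refine ⟨_, δ, hδ, h.trans (Set.image_mono fun y hy i _ => ?_)⟩
  have := (dist_pi_lt_iff (by norm_num)).1 (Metric.mem_ball.1 hy) i
  rw [Real.dist_eq, abs_lt] at this
  constructor <;> linarith

lemma map_mem_lat_of_large {d : ℕ} (hd : 1 ≤ d) {α β : Fin d → ℝ}
    (T : (Fin d → ℝ) ≃ₗ[ℝ] (Fin d → ℝ))
    (H : ∀ S : Set (Fin d → ℝ), IsRiemannMeasurable S → IsBRS α S → IsBRS β (T '' S))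
    {γ : Fin d → ℝ} (hγ : 1 ≤ ‖γ‖) (hlat : γ ∈ lat α) : T γ ∈ lat β := by
  obtain ⟨p, δ, hδ, hsub⟩ := exists_ball_subset_image_cube T
  exact mem_lat_of_bounded hd hδ fun B hB hBp => swapSum_bounded T H hγ hlat hB (hBp.trans hsub)

lemma map_mem_lat {d : ℕ} (hd : 1 ≤ d) {α β : Fin d → ℝ}
    (T : (Fin d → ℝ) ≃ₗ[ℝ] (Fin d → ℝ))
    (H : ∀ S : Set (Fin d → ℝ), IsRiemannMeasurable S → IsBRS α S → IsBRS β (T '' S))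
    {γ : Fin d → ℝ} (hlat : γ ∈ lat α) : T γ ∈ lat β := by
  by_cases hγ : 1 ≤ ‖γ‖
  · exact map_mem_lat_of_large hd T H hγ hlat
  -- A short vector is the difference of two long ones.
  obtain ⟨g, rfl⟩ := mem_lat_iff.1 hlat
  set e : Fin d → ℝ := zc fun _ => 2 with he
  have hnorm : 2 ≤ ‖e‖ := by
    have := norm_le_pi_norm e ⟨0, hd⟩
    simpa [he, zc] using this
  have heq : e = proj α (0, fun _ => 2) := by simp [proj, he]
  have h1 : T e ∈ lat β := map_mem_lat_of_large hd T H (by linarith) (heq ▸ proj_mem_lat α _)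
  have h2 : T (proj α g + e) ∈ lat β := by
    refine map_mem_lat_of_large hd T H ?_ ?_
    · have h3 := norm_sub_le (proj α g + e) (proj α g)
      rw [add_sub_cancel_left] at h3
      linarith
    · rw [heq, ← proj_add]
      exact proj_mem_lat α _
  obtain ⟨a, ha⟩ := mem_lat_iff.1 h1
  obtain ⟨b, hb⟩ := mem_lat_iff.1 h2
  refine mem_lat_iff.2 ⟨b - a, ?_⟩
  have h3 := proj_add β (b - a) a
  rw [sub_add_cancel, ha, hb, map_add] at h3
  exact (add_right_cancel h3).symm

/-- an invertible linear map `T` sends every Riemann measurable BRS w.r.t. `α`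
to a BRS w.r.t. `β` iff `T(ℤα + ℤ^d) ⊆ ℤβ + ℤ^d`. -/
theorem stmt7 {d : ℕ} (hd : 1 ≤ d) (α β : Fin d → ℝ)
    (hα : IsIrrationalVector α) (hβ : IsIrrationalVector β)
    (T : (Fin d → ℝ) ≃ₗ[ℝ] (Fin d → ℝ)) :
    (∀ S : Set (Fin d → ℝ), IsRiemannMeasurable S → IsBRS α S → IsBRS β (⇑T '' S)) ↔
      ∀ v ∈ lat α, T v ∈ lat β := by
  exact ⟨fun H v hv => map_mem_lat hd T H hv,
    fun hT S hS hBRS => isBRS_image_of_lat hd hα hβ T hT hS hBRS⟩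
end

section
/- Let α and β be two irrational vectors in ℝ^d. Then every bounded remainder set with respect to α is also a bounded remainder set with respect to β if and only if α ∈ ℤβ + ℤ^d. -/
/-! Write `f = χ_S - Leb S`, so that the discrepancy of `S` along `v` is the Birkhoff sum of `f`
under the rotation by `v`.

If `α = qβ + p`, then `q ≠ 0` by irrationality, and rotating by `α` is the same as rotating by `qβ`.
Birkhoff sums along `β` split into `|q|` Birkhoff sums along `qβ` plus fewer than `|q|` further
terms, hence stay bounded (`IsBRS.of_mem_lat`).

Conversely, for every measurable subset `A` of the torus there is a bounded set `S` in `ℝ^d` whose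
multiplicity function is `1 + 1_A(x) - 1_A(x - α)` (`exists_set_multFn`). Its measure is `1`, and
its discrepancy along `α` telescopes, so `S` is a bounded remainder set for `α` whatever `A` is. If
`α ∉ ℤβ + ℤ^d`, the orbits of `0` and of `-α` under the rotation by `β` are disjoint. Thus for
each `n` one can put thin neighbourhoods of the first `n` points of one orbit into `A` and keep
those of the other out of `A`; then `1_A(x + kβ) - 1_A(x + kβ - α) = 1` for all `k < n` and all `x`
near `0`, and the discrepancy at time `n` is `n`. Choosing the neighbourhoods of rapidly decreasing
measure makes one set `A` serve all `n` at once, each on a set of `x` of positive measure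
(`exists_wild_set`), so `S` is not a bounded remainder set for `β`. -/

open MeasureTheory

/-! ### Bounded remainder sets and the subgroup `ℤβ + ℤ^d` -/

section Forward

variable {d : ℕ}

theorem multFn_add_int (S : Set (Fin d → ℝ)) (x : Fin d → ℝ) (p : Fin d → ℤ) :
    multFn S (x + fun i => (p i : ℝ)) = multFn S x := by
  unfold multFn
  rw [← (Equiv.addLeft p).tsum_eq (fun k : Fin d → ℤ =>
    Set.indicator S (fun _ => (1 : ℝ)) (x + fun i => (k i : ℝ)))]
  refine tsum_congr fun k => ?_
  congr 1
  ext i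
  simp [add_assoc]

theorem disc_eq_sum (v : Fin d → ℝ) (S : Set (Fin d → ℝ)) (n : ℕ) (x : Fin d → ℝ) :
    disc v S n x = ∑ k ∈ Finset.range n, (multFn S (x + (k : ℝ) • v) - (volume S).toReal) := by
  simp [disc, Finset.sum_sub_distrib]

theorem ae_forall_translate {P : (Fin d → ℝ) → Prop} (h : ∀ᵐ x, P x) (v : Fin d → ℝ) :
    ∀ᵐ x, ∀ k : ℤ, P (x + (k : ℝ) • v) :=
  ae_all_iff.2 fun k =>
    (measurePreserving_add_right volume ((k : ℝ) • v)).quasiMeasurePreserving.ae h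

/-- Running an orbit of `-v` of length `n` backwards gives an orbit of `v`, started at
`x - (n - 1) v`. -/
theorem IsBRS.neg {v : Fin d → ℝ} {S : Set (Fin d → ℝ)} (h : IsBRS v S) : IsBRS (-v) S := by
  obtain ⟨C, hC⟩ := h
  refine ⟨C, ?_⟩
  filter_upwards [ae_forall_translate hC v] with x hx n hn
  convert hx (-((n - 1 : ℕ) : ℤ)) n hn using 2
  rw [disc_eq_sum, disc_eq_sum, ← Finset.sum_range_reflect]
  refine Finset.sum_congr rfl fun k hk => ?_
  rw [Finset.mem_range] at hk
  congr 2
  rw [Nat.cast_sub (by omega)]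
  ext i
  simp
  ring

theorem IsBRS.add_int {v : Fin d → ℝ} {S : Set (Fin d → ℝ)} (h : IsBRS v S) (p : Fin d → ℤ) :
    IsBRS (v + fun i => (p i : ℝ)) S := by
  obtain ⟨C, hC⟩ := h
  refine ⟨C, ?_⟩
  filter_upwards [hC] with x hx n hn
  convert hx n hn using 2
  rw [disc_eq_sum, disc_eq_sum]
  refine Finset.sum_congr rfl fun k _ => ?_
  rw [← multFn_add_int S (x + (k : ℝ) • v) (fun i => k * p i)]
  congr 2
  ext i
  simp
  ring

theorem sum_range_mul_add (f : ℕ → ℝ) (q t : ℕ) :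
    ∑ k ∈ Finset.range (q * t), f k =
      ∑ j ∈ Finset.range q, ∑ i ∈ Finset.range t, f (j + i * q) := by
  induction t with
  | zero => simp
  | succ t ih =>
    rw [Nat.mul_succ, Finset.sum_range_add, ih]
    simp_rw [Finset.sum_range_succ]
    rw [Finset.sum_add_distrib]
    congr 1
    refine Finset.sum_congr rfl fun j _ => ?_
    congr 1
    ring

/-- An orbit of `v` splits, according to the residue of the time modulo `q`, into `q` orbits of
`q • v` and a remainder of fewer than `q` points. -/
theorem IsBRS.of_nsmul {v : Fin d → ℝ} {S : Set (Fin d → ℝ)} {q : ℕ} (hq : q ≠ 0)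
    (h : IsBRS ((q : ℝ) • v) S) : IsBRS v S := by
  obtain ⟨C, hC⟩ := h
  refine ⟨q * C + q * C, ?_⟩
  filter_upwards [ae_forall_translate hC v] with x hx n hn
  have hC0 : 0 ≤ C := (abs_nonneg _).trans (hx 0 1 le_rfl)
  have hx' : ∀ (k t : ℕ), |disc ((q : ℝ) • v) S t (x + (k : ℝ) • v)| ≤ C := by
    intro k t
    rcases Nat.eq_zero_or_pos t with rfl | ht
    · simpa [disc] using hC0
    · exact_mod_cast hx k t ht
  rw [disc_eq_sum, ← Nat.div_add_mod n q, Finset.sum_range_add, sum_range_mul_add]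
  refine (abs_add_le _ _).trans (add_le_add ?_ ?_)
  · refine (Finset.abs_sum_le_sum_abs _ _).trans ?_
    refine (Finset.sum_le_card_nsmul _ _ C fun j _ => ?_).trans_eq (by simp)
    refine le_trans (le_of_eq ?_) (hx' j (n / q))
    rw [disc_eq_sum]
    congr 1
    refine Finset.sum_congr rfl fun k _ => ?_
    congr 2
    ext i
    simp
    ring
  · -- Each remaining point is an orbit of length one, so it also contributes at most `C`.
    refine (Finset.abs_sum_le_sum_abs _ _).trans ?_
    refine (Finset.sum_le_card_nsmul _ _ C fun j _ => ?_).trans ?_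
    · simpa [disc] using hx' (q * (n / q) + j) 1
    · rw [Finset.card_range, nsmul_eq_mul]
      exact mul_le_mul_of_nonneg_right
        (by exact_mod_cast (Nat.mod_lt _ (Nat.pos_of_ne_zero hq)).le) hC0

theorem IsBRS.of_mem_lat (hd : 1 ≤ d) {α β : Fin d → ℝ} (hα : IsIrrationalVector α)
    (h : α ∈ lat β) {S : Set (Fin d → ℝ)} (hS : IsBRS α S) : IsBRS β S := by
  obtain ⟨q, p, rfl⟩ := h
  have h1 := hS.add_int (-p)
  have h2 : ((q : ℝ) • β + fun i => (p i : ℝ)) + (fun i => ((-p) i : ℝ)) = (q : ℝ) • β := by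
    ext i
    simp
  rw [h2] at h1
  rcases lt_trichotomy q 0 with hq | hq | hq
  · refine IsBRS.of_nsmul (q := q.natAbs) (by omega) ?_
    convert h1.neg using 1
    rw [← neg_smul, ← Int.cast_natCast, Int.natCast_natAbs, abs_of_neg hq, Int.cast_neg]
  · -- For `q = 0` the vector `α` would be integral, which irrationality excludes since `1 ≤ d`.
    exfalso
    subst hq
    have := (hα (-p ⟨0, hd⟩) (Pi.single ⟨0, hd⟩ 1) (by simp [Pi.single_apply])).2
    have := congrFun this ⟨0, hd⟩
    simp at this
  · refine IsBRS.of_nsmul (q := q.natAbs) (by omega) ?_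
    convert h1 using 1
    rw [← Int.cast_natCast, Int.natCast_natAbs, abs_of_pos hq]

end Forward

/-! ### A set whose discrepancy along one rotation is unbounded -/

section Torus

variable {G : Type*} [AddCommGroup G] [TopologicalSpace G] [IsTopologicalAddGroup G] [T2Space G]
  [MeasurableSpace G] (μ : Measure G) [μ.IsOpenPosMeasure] [NullSingletonClass μ] [μ.OuterRegular]

/-- If `a ∉ ℤb`, the points `j • b` and `k • b - a` are distinct, so a small enough neighbourhood
`W` of `0` has disjoint translates `j • b + W` and `k • b - a + W` for all `j, k < n`. -/
theorem exists_small_nhd {a b : G} (hab : a ∉ AddSubgroup.zmultiples b) (n : ℕ)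
    {ε : ENNReal} (hε : ε ≠ 0) :
    ∃ W : Set G, IsOpen W ∧ μ W ≠ 0 ∧ μ W ≤ ε ∧
      ∀ j < n, ∀ k < n, ∀ x ∈ W, ∀ y ∈ W, j • b + x ≠ k • b - a + y := by
  have h1 : ∀ᶠ p : G × G in nhds (0, 0), ∀ j ∈ Finset.range n, ∀ k ∈ Finset.range n,
      j • b + p.1 ≠ k • b - a + p.2 := by
    simp only [Finset.eventually_all]
    intro j _ k _
    have hc : ContinuousAt (fun p : G × G => j • b + p.1) (0, 0) := by fun_prop
    have hc' : ContinuousAt (fun p : G × G => k • b - a + p.2) (0, 0) := by fun_prop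
    refine (hc.ne_iff_eventually_ne hc').1 ?_
    intro h
    apply hab
    refine AddSubgroup.mem_zmultiples_iff.2 ⟨(k : ℤ) - j, ?_⟩
    simp only [add_zero] at h
    rw [sub_zsmul, natCast_zsmul, natCast_zsmul, h]
    abel
  rw [nhds_prod_eq] at h1
  obtain ⟨t, ht, h⟩ := Filter.mem_prod_self_iff.1 h1
  obtain ⟨O, hO1, hO2, hO3⟩ := Set.exists_isOpen_lt_of_lt (μ := μ) {(0 : G)} ε
    (by simpa using pos_iff_ne_zero.2 hε)
  obtain ⟨t', ht', hto, h0⟩ := mem_nhds_iff.1 ht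
  refine ⟨t' ∩ O, hto.inter hO2, ?_, ?_, ?_⟩
  · exact ((hto.inter hO2).measure_pos μ ⟨0, h0, hO1 rfl⟩).ne'
  · exact (measure_mono Set.inter_subset_right).trans hO3.le
  · intro j hj k hk x hx y hy
    exact h (Set.mk_mem_prod (ht' hx.1) (ht' hy.1)) j (Finset.mem_range.2 hj) k
      (Finset.mem_range.2 hk)

/-- The sets of `exists_small_nhd` can be chosen of rapidly decreasing measure. The last inequality
bounds the part of `W n` spoiled by the later sets: the factor `2 * n` counts the points `k • b` and
`k • b - a` with `k < n`, the factor `2 * (n + 1 + j)` the translates of `W (n + 1 + j)`, and the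
right-hand sides sum over `j` to `μ (W n) / 2`. -/
theorem exists_nhd_seq {a b : G} (hab : a ∉ AddSubgroup.zmultiples b) :
    ∃ W : ℕ → Set G, (∀ n, IsOpen (W n)) ∧ (∀ n, μ (W n) ≠ 0) ∧
      (∀ n, ∀ j < n, ∀ k < n, ∀ x ∈ W n, ∀ y ∈ W n, j • b + x ≠ k • b - a + y) ∧
      ∀ n j, (2 * n * (2 * (n + 1 + j : ℕ)) : ENNReal) * μ (W (n + 1 + j)) ≤
        μ (W n) / 2 * 2⁻¹ ^ (j + 1) := by
  choose! F hF1 hF2 hF3 hF4 using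
    fun (n : ℕ) (ε : ENNReal) (hε : ε ≠ 0) => exists_small_nhd μ hab n hε
  let W : ℕ → Set G := fun n =>
    Nat.rec (F 0 1) (fun m w => F (m + 1) (μ w / (16 * (m + 1 : ℕ) ^ 2 : ℕ))) n
  have hW0 : W 0 = F 0 1 := rfl
  have hWs : ∀ m, W (m + 1) = F (m + 1) (μ (W m) / (16 * (m + 1 : ℕ) ^ 2 : ℕ)) := fun m => rfl
  have hne : ∀ n, μ (W n) ≠ 0 := by
    intro n
    induction n with
    | zero => exact hF2 _ _ one_ne_zero
    | succ m ih =>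
      rw [hWs]
      exact hF2 _ _ (ENNReal.div_ne_zero.2 ⟨ih, ENNReal.natCast_ne_top _⟩)
  have hε : ∀ m, μ (W m) / (16 * (m + 1 : ℕ) ^ 2 : ℕ) ≠ 0 := fun m =>
    ENNReal.div_ne_zero.2 ⟨hne m, ENNReal.natCast_ne_top _⟩
  have hstep : ∀ m, (16 * (m + 1 : ℕ) ^ 2 : ℕ) * μ (W (m + 1)) ≤ μ (W m) := by
    intro m
    have := hF3 (m + 1) _ (hε m)
    rw [← hWs] at this
    rw [mul_comm]
    exact ENNReal.mul_le_of_le_div this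
  have hdec : ∀ n j, μ (W (n + j)) ≤ μ (W n) * 2⁻¹ ^ j := by
    intro n j
    induction j with
    | zero => simp
    | succ j ih =>
      rw [pow_succ, ← mul_assoc]
      refine le_trans ?_ (mul_le_mul_left ih _)
      rw [← div_eq_mul_inv]
      refine ENNReal.le_div_iff_mul_le (by simp) (by simp) |>.2 ?_
      refine le_trans ?_ (hstep (n + j))
      rw [mul_comm, ← add_assoc]
      refine mul_le_mul_left ?_ _
      have : 2 ≤ 16 * (n + j + 1) ^ 2 := by nlinarith [Nat.zero_le (n + j)]
      exact_mod_cast this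
  refine ⟨W, ?_, hne, ?_, ?_⟩
  · rintro (_ | m)
    · exact hF1 _ _ one_ne_zero
    · exact hF1 _ _ (hε m)
  · rintro (_ | m)
    · exact hF4 _ _ one_ne_zero
    · exact hF4 _ _ (hε m)
  · intro n j
    have h1 : (4 : ENNReal) * ((2 * n * (2 * (n + 1 + j : ℕ)) : ENNReal) * μ (W (n + 1 + j)))
        ≤ μ (W n) * 2⁻¹ ^ j := by
      refine le_trans ?_ (hdec n j)
      refine le_trans ?_ (hstep (n + j))
      rw [← mul_assoc, show n + 1 + j = n + j + 1 by ring]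
      refine mul_le_mul_left ?_ _
      have : 4 * (2 * n * (2 * (n + j + 1))) ≤ 16 * (n + j + 1) ^ 2 := by nlinarith
      exact_mod_cast this
    have h2 : μ (W n) / 2 * 2⁻¹ ^ (j + 1) = (μ (W n) * 2⁻¹ ^ j) / 4 := by
      rw [pow_succ, div_eq_mul_inv, div_eq_mul_inv,
        show (4 : ENNReal) = 2 * 2 by norm_num, ENNReal.mul_inv (by simp) (by simp)]
      ring
    rw [h2]
    refine ENNReal.le_div_iff_mul_le (by simp) (by simp) |>.2 ?_
    rw [mul_comm]
    exact h1

/-- A gliding hump. Stage `n` puts the translates `k • b + W n` (together `U n`) into `A` and keeps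
the translates `k • b - a + W n` (together `V n`) out of it, for `k < n`, overriding all earlier
stages. Later stages change this for at most half of the starting points in `W n`, so on a set `E`
of positive measure the difference `1_A(x + k • b) - 1_A(x + k • b - a)` equals `1` for all
`k < n`. -/
theorem exists_wild_set [BorelSpace G] [IsFiniteMeasure μ] [μ.IsAddLeftInvariant]
    {a b : G} (hab : a ∉ AddSubgroup.zmultiples b) :
    ∃ A : Set G, MeasurableSet A ∧ ∀ n : ℕ, ∃ E : Set G, MeasurableSet E ∧ μ E ≠ 0 ∧
      ∀ x ∈ E, ∀ k < n, x + k • b ∈ A ∧ x + k • b - a ∉ A := by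
  obtain ⟨W, hWo, hWne, hWd, hWs⟩ := exists_nhd_seq μ hab
  let U : ℕ → Set G := fun n => ⋃ k ∈ Finset.range n, (fun y => y + -(k • b)) ⁻¹' W n
  let V : ℕ → Set G := fun n => ⋃ k ∈ Finset.range n, (fun y => y + -(k • b - a)) ⁻¹' W n
  -- `B n m` collects the starting points for which stage `m` interferes with stage `n`.
  let B : ℕ → ℕ → Set G := fun n m => ⋃ k ∈ Finset.range n,
    ((fun x => x + k • b) ⁻¹' (U m ∪ V m)) ∪ ((fun x => x + (k • b - a)) ⁻¹' (U m ∪ V m))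
  have hpre : ∀ (c : G) (s : Set G), μ ((fun y => y + c) ⁻¹' s) = μ s := fun c s => by
    simp_rw [add_comm _ c]
    exact measure_preimage_add μ c s
  have hmW : ∀ (n : ℕ) (c : G), MeasurableSet ((fun y => y + c) ⁻¹' W n) := fun n c =>
    ((hWo n).preimage (by fun_prop)).measurableSet
  have hUm : ∀ n, IsOpen (U n) := fun n =>
    isOpen_biUnion fun k _ => (hWo n).preimage (by fun_prop)
  have hVm : ∀ n, IsOpen (V n) := fun n =>
    isOpen_biUnion fun k _ => (hWo n).preimage (by fun_prop)
  have hBm : ∀ n m, IsOpen (B n m) := fun n m =>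
    isOpen_biUnion fun k _ => (((hUm m).union (hVm m)).preimage (by fun_prop)).union
      (((hUm m).union (hVm m)).preimage (by fun_prop))
  have hμU : ∀ n, μ (U n) ≤ n * μ (W n) := fun n => by
    refine (measure_biUnion_finset_le _ _).trans ?_
    simp [hpre]
  have hμV : ∀ n, μ (V n) ≤ n * μ (W n) := fun n => by
    refine (measure_biUnion_finset_le _ _).trans ?_
    simp [hpre]
  have hμB : ∀ n m, μ (B n m) ≤ (2 * n * (2 * m) : ENNReal) * μ (W m) := fun n m => by
    have hUV : μ (U m ∪ V m) ≤ 2 * m * μ (W m) := by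
      refine (measure_union_le _ _).trans ((add_le_add (hμU m) (hμV m)).trans_eq ?_)
      ring
    refine (measure_biUnion_finset_le _ _).trans ?_
    calc _ ≤ ∑ k ∈ Finset.range n, (2 * (2 * m * μ (W m))) := by
            refine Finset.sum_le_sum fun k _ => (measure_union_le _ _).trans ?_
            rw [hpre, hpre, two_mul]
            exact add_le_add hUV hUV
      _ = _ := by
            simp only [Finset.sum_const, Finset.card_range, nsmul_eq_mul]
            ring
  refine ⟨⋃ n, (U n \ ⋃ m ∈ Set.Ioi n, (U m ∪ V m)), ?_, ?_⟩
  · refine MeasurableSet.iUnion fun n => (hUm n).measurableSet.diff ?_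
    exact (isOpen_biUnion fun m _ => (hUm m).union (hVm m)).measurableSet
  intro n
  refine ⟨W n \ ⋃ j, B n (n + 1 + j), ?_, ?_, ?_⟩
  · exact (hWo n).measurableSet.diff (isOpen_iUnion fun j => hBm _ _).measurableSet
  · intro h0
    have h1 : μ (W n) ≤ μ (⋃ j, B n (n + 1 + j)) := by
      rw [← zero_add (μ (⋃ j, B n (n + 1 + j))), ← h0]
      refine (measure_mono (fun x hx => ?_)).trans (measure_union_le _ _)
      by_cases hx' : x ∈ ⋃ j, B n (n + 1 + j)
      · exact Or.inr hx'
      · exact Or.inl ⟨hx, hx'⟩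
    have h2 : μ (⋃ j, B n (n + 1 + j)) ≤ μ (W n) / 2 := by
      refine (measure_iUnion_le _).trans ?_
      refine (ENNReal.tsum_le_tsum fun j => (hμB n (n + 1 + j)).trans (hWs n j)).trans_eq ?_
      rw [ENNReal.tsum_mul_left, ENNReal.tsum_geometric_add_one, ENNReal.one_sub_inv_two, inv_inv,
        ENNReal.inv_mul_cancel (by simp) (by simp), mul_one]
    exact (ENNReal.half_lt_self (hWne n) (measure_ne_top μ _)).not_ge (h1.trans h2)
  · rintro x ⟨hxW, hxB⟩ k hk
    have hxB' : ∀ m, n < m → x + k • b ∉ U m ∪ V m ∧ x + (k • b - a) ∉ U m ∪ V m := by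
      intro m hm
      obtain ⟨j, rfl⟩ := Nat.exists_eq_add_of_le (Nat.succ_le_of_lt hm)
      constructor
      · intro h
        exact hxB (Set.mem_iUnion.2 ⟨j, Set.mem_biUnion (Finset.mem_range.2 hk) (Or.inl h)⟩)
      · intro h
        exact hxB (Set.mem_iUnion.2 ⟨j, Set.mem_biUnion (Finset.mem_range.2 hk) (Or.inr h)⟩)
    constructor
    · refine Set.mem_iUnion.2 ⟨n, ?_, ?_⟩
      · refine Set.mem_biUnion (Finset.mem_range.2 hk) ?_
        simpa using hxW
      · simp only [Set.mem_iUnion, not_exists]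
        exact fun m hm => (hxB' m hm).1
    · intro hA
      obtain ⟨n', hU, hD⟩ := Set.mem_iUnion.1 hA
      rw [add_sub_assoc] at hU hD
      have hV : x + (k • b - a) ∈ V n := by
        refine Set.mem_biUnion (Finset.mem_range.2 hk) ?_
        rwa [Set.mem_preimage, add_neg_cancel_right]
      rcases lt_trichotomy n' n with h | h | h
      · exact hD (Set.mem_biUnion (Set.mem_Ioi.2 h) (Or.inr hV))
      · subst h
        simp only [U, Set.mem_iUnion, Set.mem_preimage, Finset.mem_range] at hU
        obtain ⟨j, hj, hU⟩ := hU
        refine hWd _ j hj k hk _ hU x hxW ?_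
        abel
      · exact (hxB' n' h).2 (Or.inl hU)

end Torus

/-! ### Sets in `ℝ^d` with prescribed multiplicity function -/

section Backward

variable {d : ℕ}

/-- The projection of `ℝ^d` onto the torus, realised as a product of circles of length one. -/
def toTorus (x : Fin d → ℝ) : Fin d → UnitAddCircle := fun i => (x i : UnitAddCircle)

/-- The half-open unit cube `(0, 1]^d`. -/
def unitCube (d : ℕ) : Set (Fin d → ℝ) := Set.univ.pi fun _ => Set.Ioc (0 : ℝ) 1

theorem toTorus_add (x y : Fin d → ℝ) : toTorus (x + y) = toTorus x + toTorus y := by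
  ext i
  simp [toTorus]

theorem toTorus_int (k : Fin d → ℤ) : toTorus (fun i => (k i : ℝ)) = 0 := by
  ext i
  simp only [toTorus, Pi.zero_apply]
  exact (AddCircle.coe_eq_zero_iff 1).2 ⟨k i, by simp⟩

theorem toTorus_nat_smul (k : ℕ) (x : Fin d → ℝ) : toTorus ((k : ℝ) • x) = k • toTorus x := by
  ext i
  simp only [toTorus, Pi.smul_apply, smul_eq_mul, ← nsmul_eq_mul, AddCircle.coe_nsmul]

theorem measurePreserving_toTorus :
    MeasurePreserving (toTorus (d := d)) (volume.restrict (unitCube d)) volume := by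
  have h := measurePreserving_pi (fun _ : Fin d => (volume : Measure ℝ).restrict (Set.Ioc 0 1))
    (fun _ : Fin d => (volume : Measure UnitAddCircle))
    (f := fun _ x => (x : UnitAddCircle))
    (fun i => by simpa using UnitAddCircle.measurePreserving_mk 0)
  rw [← Measure.restrict_pi_pi] at h
  exact h

theorem measurableSet_unitCube : MeasurableSet (unitCube d) :=
  MeasurableSet.univ_pi fun _ => measurableSet_Ioc

theorem measurable_toTorus : Measurable (toTorus (d := d)) :=
  measurePreserving_toTorus.measurable

theorem volume_cube_inter {E : Set (Fin d → UnitAddCircle)} (hE : MeasurableSet E) :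
    volume (toTorus ⁻¹' E ∩ unitCube d) = volume E := by
  rw [← measurePreserving_toTorus.measure_preimage hE.nullMeasurableSet,
    Measure.restrict_apply (measurable_toTorus hE)]

theorem exists_unique_int_add_mem (x : Fin d → ℝ) :
    ∃ k₀ : Fin d → ℤ, ∀ k : Fin d → ℤ, (x + fun i => (k i : ℝ)) ∈ unitCube d ↔ k = k₀ := by
  refine ⟨fun i => -toIocDiv one_pos 0 (x i), fun k => ?_⟩
  simp only [unitCube, Set.mem_univ_pi, funext_iff]
  refine forall_congr' fun i => ?_
  have := toIocDiv_eq_iff (one_pos (α := ℝ)) (a := 0) (b := x i) (n := -k i)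
  simp only [zero_add, zsmul_eq_mul, mul_one, Int.cast_neg, sub_neg_eq_add] at this
  rw [Pi.add_apply, ← this]
  constructor <;> intro h <;> omega

/-- The part of the unit cube, translated by `-e`, lying over `E` meets each coset `x + ℤ^d` exactly
once if `x` lies over `E`, and never otherwise. -/
theorem hasSum_indicator_cube (E : Set (Fin d → UnitAddCircle)) (e : Fin d → ℤ) (x : Fin d → ℝ) :
    HasSum (fun k : Fin d → ℤ => Set.indicator
      {y : Fin d → ℝ | toTorus y ∈ E ∧ (y + fun i => (e i : ℝ)) ∈ unitCube d}
        (fun _ => (1 : ℝ)) (x + fun i => (k i : ℝ)))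
      (Set.indicator E (fun _ => (1 : ℝ)) (toTorus x)) := by
  obtain ⟨k₀, hk₀⟩ := exists_unique_int_add_mem (x + fun i => (e i : ℝ))
  have ht : ∀ k : Fin d → ℤ, toTorus (x + fun i => (k i : ℝ)) = toTorus x := fun k => by
    rw [toTorus_add, toTorus_int, add_zero]
  have hk : ∀ k : Fin d → ℤ, ((x + fun i => (k i : ℝ)) + fun i => (e i : ℝ)) ∈ unitCube d ↔
      k = k₀ := fun k => by rw [add_right_comm, hk₀]
  classical
  convert hasSum_ite_eq k₀ (E.indicator (fun _ => (1 : ℝ)) (toTorus x)) using 2 with k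
  simp only [Set.indicator_apply, Set.mem_ofPred_eq, ht, hk]
  split_ifs <;> simp_all

/-- The function `1_E + 1_F` is the multiplicity function of some bounded set: put `E` in one unit
cube and `F` in a disjoint integer translate of it. -/
theorem exists_set_multFn (hd : 1 ≤ d) {E F : Set (Fin d → UnitAddCircle)} (hE : MeasurableSet E)
    (hF : MeasurableSet F) :
    ∃ S : Set (Fin d → ℝ), Bornology.IsBounded S ∧ MeasurableSet S ∧
      volume S = volume E + volume F ∧ ∀ x, multFn S x =
        E.indicator (fun _ => (1 : ℝ)) (toTorus x) + F.indicator (fun _ => (1 : ℝ)) (toTorus x) := by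
  let P : (Fin d → ℤ) → Set (Fin d → UnitAddCircle) → Set (Fin d → ℝ) := fun e E =>
    {y : Fin d → ℝ | toTorus y ∈ E ∧ (y + fun i => (e i : ℝ)) ∈ unitCube d}
  have hbd : ∀ e E, Bornology.IsBounded (P e E) := by
    intro e E
    have h1 : Bornology.IsBounded (Set.univ.pi fun i => Set.Ioc (-(e i : ℝ)) (1 - e i)) :=
      Bornology.IsBounded.pi fun i => Metric.isBounded_Ioc _ _
    refine h1.subset fun y hy i hi => ?_
    have := hy.2 i hi
    simp only [Pi.add_apply, Set.mem_Ioc] at this ⊢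
    constructor <;> linarith [this.1, this.2]
  have hP : ∀ e E, P e E = (fun y => y + fun i => (e i : ℝ)) ⁻¹' (toTorus ⁻¹' E ∩ unitCube d) := by
    intro e E
    ext y
    simp [P, toTorus_add, toTorus_int]
  have hms : ∀ e {E}, MeasurableSet E → MeasurableSet (P e E) := fun e E hE => by
    rw [hP]
    exact (measurable_add_const _) ((measurable_toTorus hE).inter measurableSet_unitCube)
  have hvol : ∀ e {E}, MeasurableSet E → volume (P e E) = volume E := fun e E hE => by
    rw [hP, measure_preimage_add_right, volume_cube_inter hE]
  have hdj : Disjoint (P 0 E) (P 1 F) := by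
    refine Set.disjoint_left.2 fun y h1 h2 => ?_
    have h1 := h1.2 ⟨0, hd⟩ trivial
    have h2 := h2.2 ⟨0, hd⟩ trivial
    simp only [Pi.add_apply, Pi.zero_apply, Pi.one_apply, Int.cast_zero, Int.cast_one,
      Set.mem_Ioc] at h1 h2
    linarith [h1.1, h2.2]
  refine ⟨P 0 E ∪ P 1 F, (hbd _ _).union (hbd _ _), (hms _ hE).union (hms _ hF), ?_, ?_⟩
  · rw [measure_union hdj (hms _ hF), hvol _ hE, hvol _ hF]
  · intro x
    rw [← ((hasSum_indicator_cube E 0 x).add (hasSum_indicator_cube F 1 x)).tsum_eq]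
    unfold multFn
    refine tsum_congr fun k => ?_
    rw [Set.indicator_union_of_disjoint hdj]

theorem toTorus_notMem_zmultiples {α β : Fin d → ℝ} (h : α ∉ lat β) :
    toTorus α ∉ AddSubgroup.zmultiples (toTorus β) := by
  rintro ⟨q, hq⟩
  apply h
  have : ∀ i, ∃ p : ℤ, (p : ℝ) = α i - q * β i := by
    intro i
    have h1 : ((α i - q * β i : ℝ) : UnitAddCircle) = 0 := by
      have h2 := congrFun hq i
      simp only [toTorus, Pi.smul_apply, ← AddCircle.coe_zsmul, zsmul_eq_mul] at h2
      rw [AddCircle.coe_sub, h2, sub_self]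
    obtain ⟨p, hp⟩ := (AddCircle.coe_eq_zero_iff 1).1 h1
    exact ⟨p, by simpa using hp⟩
  choose p hp using this
  refine ⟨q, p, ?_⟩
  ext i
  simp [hp]

/-- With `A` as in `exists_wild_set`, the set `S` has multiplicity function
`1 + 1_A(x) - 1_A(x - α)` and measure `1`, so its discrepancy telescopes along `α`. -/
theorem exists_isBRS_not_isBRS (hd : 1 ≤ d) {α β : Fin d → ℝ} (h : α ∉ lat β) :
    ∃ S : Set (Fin d → ℝ), Bornology.IsBounded S ∧ MeasurableSet S ∧ IsBRS α S ∧ ¬ IsBRS β S := by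
  have : Nonempty (Fin d) := ⟨⟨0, hd⟩⟩
  have : NullSingletonClass (volume : Measure UnitAddCircle) := ⟨fun x => by
    rw [← Metric.closedBall_zero, AddCircle.volume_closedBall]
    simp⟩
  have : IsProbabilityMeasure (volume : Measure UnitAddCircle) := ⟨UnitAddCircle.measure_univ⟩
  have : IsProbabilityMeasure (volume : Measure (Fin d → UnitAddCircle)) :=
    Measure.pi.instIsProbabilityMeasure _
  set a := toTorus α
  set b := toTorus β
  classical
  obtain ⟨A, hA, hE⟩ := exists_wild_set (volume : Measure (Fin d → UnitAddCircle))
    (toTorus_notMem_zmultiples h)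
  have hF : MeasurableSet ((fun y => y + -a) ⁻¹' A)ᶜ := (measurable_add_const _ hA).compl
  obtain ⟨S, hSb, hSm, hSv, hS⟩ := exists_set_multFn hd hA hF
  have hvol : (volume S).toReal = 1 := by
    rw [hSv, measure_compl (measurable_add_const _ hA) (measure_ne_top _ _),
      measure_preimage_add_right, measure_univ, add_tsub_cancel_of_le prob_le_one]
    rfl
  let I : (Fin d → UnitAddCircle) → ℝ := A.indicator fun _ => (1 : ℝ)
  have hdisc : ∀ v n x, disc v S n x = ∑ k ∈ Finset.range n,
      (I (toTorus x + k • toTorus v) - I (toTorus x + k • toTorus v - a)) := by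
    intro v n x
    rw [disc_eq_sum]
    refine Finset.sum_congr rfl fun k _ => ?_
    rw [hS, hvol, toTorus_add, toTorus_nat_smul]
    simp only [I, Set.indicator_apply, Set.mem_compl_iff, Set.mem_preimage, sub_eq_add_neg]
    split_ifs <;> simp_all
  refine ⟨S, hSb, hSm, ⟨1, Filter.Eventually.of_forall fun x n _ => ?_⟩, ?_⟩
  · have htel := Finset.sum_range_sub (fun k => I (toTorus x + k • a - a)) n
    rw [hdisc]
    have hcongr : ∀ k ∈ Finset.range n,
        I (toTorus x + k • toTorus α) - I (toTorus x + k • toTorus α - a) =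
        I (toTorus x + (k + 1) • a - a) - I (toTorus x + k • a - a) := by
      intro k _
      rw [succ_nsmul, ← add_assoc, add_sub_cancel_right]
    rw [Finset.sum_congr rfl hcongr, htel]
    have h01 : ∀ y, 0 ≤ I y ∧ I y ≤ 1 := fun y => by
      simp only [I, Set.indicator_apply]
      split_ifs <;> norm_num
    rw [abs_le]
    constructor <;> linarith [(h01 (toTorus x + n • a - a)).1, (h01 (toTorus x + n • a - a)).2,
      (h01 (toTorus x + 0 • a - a)).1, (h01 (toTorus x + 0 • a - a)).2]
  · rintro ⟨C, hC⟩
    obtain ⟨n, hn⟩ := exists_nat_gt (max C 0)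
    obtain ⟨E, hEm, hE0, hEA⟩ := hE n
    have hn1 : 1 ≤ n := Nat.one_le_iff_ne_zero.2 fun h0 => by
      subst h0
      exact absurd hn (by simp)
    apply hE0
    rw [← volume_cube_inter hEm]
    refine measure_mono_null (fun x hx => ?_) hC
    intro hx'
    have h1 := hx' n hn1
    have h2 : disc β S n x = n := by
      rw [hdisc]
      have : ∀ k ∈ Finset.range n,
          I (toTorus x + k • toTorus β) - I (toTorus x + k • toTorus β - a) = 1 := by
        intro k hk
        obtain ⟨h3, h4⟩ := hEA _ hx.1 k (Finset.mem_range.1 hk)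
        simp [I, a, h3, h4]
      rw [Finset.sum_congr rfl this]
      simp
    rw [h2, Nat.abs_cast] at h1
    exact absurd ((le_max_left C 0).trans_lt hn) (not_lt.2 h1)

end Backward

/-- every bounded remainder set w.r.t. `α` is a bounded remainder set
w.r.t. `β` iff `α ∈ ℤβ + ℤ^d`. -/
theorem stmt8 {d : ℕ} (hd : 1 ≤ d) (α β : Fin d → ℝ)
    (hα : IsIrrationalVector α) (hβ : IsIrrationalVector β) :
    (∀ S : Set (Fin d → ℝ), Bornology.IsBounded S → MeasurableSet S →
      IsBRS α S → IsBRS β S) ↔ α ∈ lat β := by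
  refine ⟨fun h => ?_, fun h S _ _ hS => hS.of_mem_lat hd hα h⟩
  by_contra hn
  obtain ⟨S, hb, hm, h1, h2⟩ := exists_isBRS_not_isBRS hd hn
  exact h2 (h S hb hm h1)
end

section
/- Let α be an irrational vector in ℝ^d and let S ⊆ ℝ^d be a bounded measurable set. Suppose that the set of points x ∈ 𝕋^d for which sup_{n ≥ 1} |∑_{k=0}^{n−1} χ_S(x + kα) − n·Leb(S)| < ∞ has positive Lebesgue measure. Then S is a bounded remainder set with respect to α, i.e., there is a single constant C such that |∑_{k=0}^{n−1} χ_S(x + kα) − n·Leb(S)| ≤ C for all n ≥ 1 and almost every x ∈ 𝕋^d. -/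
/-! Write `D n` for the discrepancy and `T x = x + α`. Everything follows from ergodicity of the
rotation `T` on the torus, applied to the sets
`A M = {x | ∀ m n, |D n x - D m x| ≤ M}`, `M ∈ ℕ`.

The cocycle identity `D n (T x) = D (n + 1) x - D 1 x` (`disc_add`) gives
`D n (T x) - D m (T x) = D (n + 1) x - D (m + 1) x`, so `T` maps `A M` into itself. The set of points
with bounded discrepancies is contained in `⋃ M, A M`; as it has positive measure, some `A M` has
positive measure, hence full measure by ergodicity. Since `D 0 = 0`, the bound `|D n x| ≤ M` holds
for every `n` and almost every `x`.

Ergodicity is proved with Fourier series (`measure_sq_of_subset_preimage`). If `B` is a measurable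
subset of the torus with `B ⊆ T⁻¹ B`, then `B = T⁻¹ B` up to a null set because `T` preserves the
measure, so each Fourier coefficient `c n` of the indicator of `B` satisfies
`c n = exp (-2πi ⟨n, α⟩) * c n`. Irrationality of `α` forces `c n = 0` for `n ≠ 0`, and Parseval's
identity reads `μ(B)² = μ(B)`. The result is carried to periodic subsets of `ℝ^d` by
`volume_eq_zero_or_compl`. -/

open MeasureTheory

/-- The probability Haar measure on `ℝ / ℤ`, the normalisation used for multivariate Fourier
series in Mathlib. -/
noncomputable local instance : MeasureSpace UnitAddCircle := ⟨AddCircle.haarAddCircle⟩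

local instance : Measure.IsAddHaarMeasure (volume : Measure UnitAddCircle) :=
  inferInstanceAs (Measure.IsAddHaarMeasure AddCircle.haarAddCircle)

local instance : IsProbabilityMeasure (volume : Measure UnitAddCircle) :=
  inferInstanceAs (IsProbabilityMeasure AddCircle.haarAddCircle)

/-! ### The discrepancy cocycle -/

lemma multFn_periodic {d : ℕ} (S : Set (Fin d → ℝ)) (x : Fin d → ℝ) (l : Fin d → ℤ) :
    multFn S (x + fun i => (l i : ℝ)) = multFn S x := by
  unfold multFn
  rw [← (Equiv.addLeft l).tsum_eq
    (fun k : Fin d → ℤ => S.indicator (fun _ => (1 : ℝ)) (x + fun i => (k i : ℝ)))]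
  refine tsum_congr fun k => ?_
  congr 1
  ext i
  simp [add_assoc]

lemma measurable_multFn {d : ℕ} {S : Set (Fin d → ℝ)} (hS : MeasurableSet S) :
    Measurable (multFn S) := by
  -- as a countable sum in `ℝ≥0∞` the function is measurable without summability conditions
  have h : multFn S = fun x => (∑' k : Fin d → ℤ,
      S.indicator (fun _ => (1 : ENNReal)) (x + fun i => (k i : ℝ))).toReal := by
    ext x
    rw [ENNReal.tsum_toReal_eq]
    · refine tsum_congr fun k => ?_
      by_cases hk : (x + fun i => (k i : ℝ)) ∈ S <;> simp [hk]
    · intro k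
      by_cases hk : (x + fun i => (k i : ℝ)) ∈ S <;> simp [hk]
  rw [h]
  refine ENNReal.measurable_toReal.comp (Measurable.tsum fun k => ?_)
  exact (measurable_const.indicator hS).comp (measurable_id.add_const _)

lemma measurable_disc {d : ℕ} (v : Fin d → ℝ) {S : Set (Fin d → ℝ)} (hS : MeasurableSet S)
    (n : ℕ) : Measurable (disc v S n) := by
  unfold disc
  refine Measurable.sub_const (Finset.measurable_sum _ fun k _ => ?_) _
  exact (measurable_multFn hS).comp (measurable_id.add_const _)

lemma disc_periodic {d : ℕ} (v : Fin d → ℝ) (S : Set (Fin d → ℝ)) (n : ℕ)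
    (x : Fin d → ℝ) (l : Fin d → ℤ) :
    disc v S n (x + fun i => (l i : ℝ)) = disc v S n x := by
  unfold disc
  congr 1
  refine Finset.sum_congr rfl fun k _ => ?_
  rw [add_right_comm, multFn_periodic]

/-- The cocycle identity for one step of the rotation. -/
lemma disc_add {d : ℕ} (v : Fin d → ℝ) (S : Set (Fin d → ℝ)) (n : ℕ) (x : Fin d → ℝ) :
    disc v S n (x + v) = disc v S (n + 1) x - disc v S 1 x := by
  unfold disc
  rw [Finset.sum_range_succ']
  have : ∀ k : ℕ, x + v + (k : ℝ) • v = x + ((k + 1 : ℕ) : ℝ) • v := by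
    intro k; push_cast; rw [add_smul, one_smul]; abel
  simp only [this, Finset.sum_range_one]
  push_cast
  ring

/-! ### Ergodicity of irrational rotations -/

/-- The canonical projection `ℝ^d → ℝ^d/ℤ^d`. -/
def torusProj {d : ℕ} (x : Fin d → ℝ) : UnitAddTorus (Fin d) := fun i => (x i : UnitAddCircle)

/-- Irrationality of `α` says that no nontrivial character is trivial at the projection of `α`. -/
lemma mFourier_torusProj_ne_one {d : ℕ} {α : Fin d → ℝ} (hα : IsIrrationalVector α)
    {n : Fin d → ℤ} (hn : n ≠ 0) : UnitAddTorus.mFourier n (torusProj α) ≠ 1 := by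
  intro h
  have h1 : UnitAddTorus.mFourier n (torusProj α) =
      Complex.exp ((∑ i, (n i : ℂ) * α i) * (2 * Real.pi * Complex.I)) := by
    simp only [UnitAddTorus.mFourier, torusProj, ContinuousMap.coe_mk, fourier_coe_apply]
    rw [← Complex.exp_sum, Finset.sum_mul]
    congr 1
    refine Finset.sum_congr rfl fun i _ => ?_
    push_cast
    ring
  rw [h1, Complex.exp_eq_one_iff] at h
  obtain ⟨m, hm⟩ := h
  have h2 := mul_right_cancel₀ Complex.two_pi_I_ne_zero hm
  have h3 : ∑ i, (n i : ℝ) * α i = m := by exact_mod_cast h2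
  exact hn (hα (-m) n (by rw [h3]; push_cast; ring)).2

lemma mFourier_apply_add {d : ℕ} (n : Fin d → ℤ) (x y : UnitAddTorus (Fin d)) :
    UnitAddTorus.mFourier n (x + y) = UnitAddTorus.mFourier n x * UnitAddTorus.mFourier n y := by
  simp [UnitAddTorus.mFourier, fourier_apply, AddCircle.toCircle_add, Finset.prod_mul_distrib]

/-- Ergodicity of an irrational rotation of the torus: a measurable set that is mapped into itself
has measure `0` or `1`, expressed as `μ(B)² = μ(B)`. -/
lemma measure_sq_of_subset_preimage {d : ℕ} {α : Fin d → ℝ} (hα : IsIrrationalVector α)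
    {B : Set (UnitAddTorus (Fin d))} (hB : MeasurableSet B)
    (hinv : ∀ t ∈ B, t + torusProj α ∈ B) :
    (volume : Measure (UnitAddTorus (Fin d))).real B ^ 2 =
      (volume : Measure (UnitAddTorus (Fin d))).real B := by
  set a := torusProj α
  have hmp : MeasurePreserving (fun t : UnitAddTorus (Fin d) => t + a) volume volume :=
    measurePreserving_add_right volume a
  have hae : B =ᵐ[volume] (fun t => t + a) ⁻¹' B :=
    ae_eq_of_subset_of_measure_ge hinv (hmp.measure_preimage hB.nullMeasurableSet).le
      hB.nullMeasurableSet (measure_ne_top _ _)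
  let f : Lp ℂ 2 (volume : Measure (UnitAddTorus (Fin d))) :=
    indicatorConstLp 2 hB (measure_ne_top _ _) 1
  have hf : f =ᵐ[volume] B.indicator fun _ => (1 : ℂ) := indicatorConstLp_coeFn
  have hc : ∀ n, UnitAddTorus.mFourierCoeff f n =
      ∫ t, UnitAddTorus.mFourier (-n) t * B.indicator (fun _ => (1 : ℂ)) t := by
    intro n
    refine integral_congr_ae ?_
    filter_upwards [hf] with t ht
    rw [ht, smul_eq_mul]
  have hc0 : UnitAddTorus.mFourierCoeff f 0 =
      ((volume : Measure (UnitAddTorus (Fin d))).real B : ℂ) := by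
    rw [hc]
    simp [UnitAddTorus.mFourier_zero, integral_indicator hB]
  have hcn : ∀ n, n ≠ 0 → UnitAddTorus.mFourierCoeff f n = 0 := by
    intro n hn
    have h1 : UnitAddTorus.mFourierCoeff f n =
        UnitAddTorus.mFourier (-n) a * UnitAddTorus.mFourierCoeff f n := by
      rw [hc]
      conv_lhs => rw [← integral_add_right_eq_self _ a]
      rw [← integral_const_mul]
      refine integral_congr_ae ?_
      filter_upwards [hae.mem_iff] with t ht
      have : B.indicator (fun _ => (1 : ℂ)) (t + a) = B.indicator (fun _ => (1 : ℂ)) t := by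
        by_cases h : t ∈ B
        · have h' : t + a ∈ B := ht.1 h
          simp [h, h']
        · have h' : t + a ∉ B := fun h' => h (ht.2 h')
          simp [h, h']
      rw [this, mFourier_apply_add]
      ring
    have h2 := mFourier_torusProj_ne_one hα (neg_ne_zero.2 hn)
    by_contra h0
    exact h2 (mul_right_cancel₀ h0 (by rw [one_mul]; exact h1.symm))
  have hpars := UnitAddTorus.hasSum_sq_mFourierCoeff f
  have hsingle := hasSum_single (f := fun n => ‖UnitAddTorus.mFourierCoeff f n‖ ^ 2) 0
    (fun n hn => by simp [hcn n hn])
  have hnormsq : ∫ t, ‖f t‖ ^ 2 = (volume : Measure (UnitAddTorus (Fin d))).real B := by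
    have : ∫ t, ‖f t‖ ^ 2 = ∫ t, B.indicator (fun _ => (1 : ℝ)) t := by
      refine integral_congr_ae ?_
      filter_upwards [hf] with t ht
      rw [ht]
      by_cases h : t ∈ B <;> simp [h]
    rw [this]
    simp [integral_indicator hB]
  have := hsingle.unique hpars
  rw [hnormsq, hc0] at this
  simpa using this

/-! ### Periodic subsets of `ℝ^d` -/

/-- The measurable section of `torusProj` with values in the cube `∏ i, (b i, b i + 1]`. -/
noncomputable def torusSec {d : ℕ} (b : Fin d → ℝ) (t : UnitAddTorus (Fin d)) : Fin d → ℝ :=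
  (UnitAddTorus.measurableEquivPiIoc b t).1

lemma measurable_torusSec {d : ℕ} (b : Fin d → ℝ) : Measurable (torusSec b) :=
  measurable_subtype_coe.comp (UnitAddTorus.measurableEquivPiIoc b).measurable

lemma torusProj_torusSec {d : ℕ} (b : Fin d → ℝ) (t : UnitAddTorus (Fin d)) :
    torusProj (torusSec b t) = t :=
  (UnitAddTorus.measurableEquivPiIoc b).symm_apply_apply t

lemma mem_iff_of_torusProj_eq {d : ℕ} {A : Set (Fin d → ℝ)}
    (hper : ∀ x (l : Fin d → ℤ), x ∈ A → (x + fun i => (l i : ℝ)) ∈ A) {x y : Fin d → ℝ}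
    (h : torusProj x = torusProj y) : x ∈ A ↔ y ∈ A := by
  have key : ∀ {x y : Fin d → ℝ}, torusProj x = torusProj y → x ∈ A → y ∈ A := by
    intro x y h hx
    have h1 : ∀ i, ∃ l : ℤ, y i = x i + l := by
      intro i
      have h2 : ((x i : ℝ) : UnitAddCircle) = (y i : ℝ) := congrFun h i
      obtain ⟨l, hl⟩ := QuotientAddGroup.eq.1 h2
      exact ⟨l, by simp at hl; linarith⟩
    choose l hl using h1
    have : y = x + fun i => (l i : ℝ) := funext hl
    rw [this]
    exact hper x l hx
  exact ⟨key h, key h.symm⟩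

/-- A periodic set is null as soon as its trace on the torus is null. -/
lemma volume_eq_zero_of_torusSec {d : ℕ} {A : Set (Fin d → ℝ)} (hA : MeasurableSet A)
    (hper : ∀ x (l : Fin d → ℤ), x ∈ A → (x + fun i => (l i : ℝ)) ∈ A)
    (h : (volume : Measure (UnitAddTorus (Fin d))) (torusSec 0 ⁻¹' A) = 0) : volume A = 0 := by
  -- the unit cubes with integral corners cover `ℝ^d`, and `A` has the same trace on each
  have hcube : ∀ b : Fin d → ℤ,
      volume (A ∩ {x : Fin d → ℝ | ∀ i, x i ∈ Set.Ioc (b i : ℝ) (b i + 1)}) = 0 := by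
    intro b
    set c : Fin d → ℝ := fun i => (b i : ℝ)
    have hpre : torusSec c ⁻¹' A = torusSec 0 ⁻¹' A := by
      ext t
      exact mem_iff_of_torusProj_eq hper (by rw [torusProj_torusSec, torusProj_torusSec])
    have hm := (UnitAddTorus.measurePreserving_equivPiIoc c).measure_preimage
      (hA.preimage measurable_subtype_coe).nullMeasurableSet
    have hQ : MeasurableSet {x : Fin d → ℝ | ∀ i, x i ∈ Set.Ioc (c i) (c i + 1)} :=
      MeasurableSet.univ_pi' (fun i => measurableSet_Ioc)
    have hm' := hm.trans ((MeasurableEmbedding.subtype_coe hQ).comap_apply volume _)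
    have himg := Subtype.image_preimage_coe {x : Fin d → ℝ | ∀ i, x i ∈ Set.Ioc (c i) (c i + 1)} A
    rw [Set.inter_comm]
    refine (congrArg volume himg).symm.trans (hm'.symm.trans ?_)
    rw [← h, ← hpre]
    rfl
  have hcov : A ⊆ ⋃ b : Fin d → ℤ,
      A ∩ {x : Fin d → ℝ | ∀ i, x i ∈ Set.Ioc (b i : ℝ) (b i + 1)} := by
    intro x hx
    refine Set.mem_iUnion.2 ⟨fun i => ⌈x i⌉ - 1, hx, fun i => ?_⟩
    push_cast
    exact ⟨by linarith [Int.ceil_lt_add_one (x i)], by linarith [Int.le_ceil (x i)]⟩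
  exact measure_mono_null hcov (measure_iUnion_null hcube)

/-- Ergodicity of an irrational rotation, for periodic subsets of `ℝ^d`. -/
lemma volume_eq_zero_or_compl {d : ℕ} {α : Fin d → ℝ} (hα : IsIrrationalVector α)
    {A : Set (Fin d → ℝ)} (hA : MeasurableSet A)
    (hper : ∀ x (l : Fin d → ℤ), x ∈ A → (x + fun i => (l i : ℝ)) ∈ A)
    (hinv : ∀ x ∈ A, x + α ∈ A) : volume A = 0 ∨ volume Aᶜ = 0 := by
  have hB : MeasurableSet (torusSec 0 ⁻¹' A) := measurable_torusSec 0 hA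
  have hsq := measure_sq_of_subset_preimage hα hB (by
    intro t ht
    refine (mem_iff_of_torusProj_eq hper ?_).1 (hinv _ ht)
    rw [torusProj_torusSec]
    ext i
    have := congrFun (torusProj_torusSec 0 t) i
    simp only [torusProj, Pi.add_apply, AddCircle.coe_add] at this ⊢
    rw [this])
  have h01 : (volume : Measure (UnitAddTorus (Fin d))).real (torusSec 0 ⁻¹' A) = 0 ∨
      (volume : Measure (UnitAddTorus (Fin d))).real (torusSec 0 ⁻¹' A) = 1 := by
    rw [sq] at hsq
    exact IsIdempotentElem.iff_eq_zero_or_one.1 hsq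
  rcases h01 with h | h
  · exact Or.inl (volume_eq_zero_of_torusSec hA hper ((measureReal_eq_zero_iff).1 h))
  · refine Or.inr (volume_eq_zero_of_torusSec hA.compl ?_ ?_)
    · intro x l hx hxl
      refine hx ?_
      have := hper _ (-l) hxl
      convert this using 1
      ext i
      simp
    · rw [Set.preimage_compl, ← measureReal_eq_zero_iff, probReal_compl_eq_one_sub hB, h, sub_self]

/-! ### Bounded remainder sets -/

/-- if the discrepancies are bounded (pointwise, non-uniformly) on a set of
positive measure, then `S` is a bounded remainder set. -/
theorem stmt10 {d : ℕ} (hd : 1 ≤ d) (α : Fin d → ℝ) (hα : IsIrrationalVector α)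
    (S : Set (Fin d → ℝ)) (hbd : Bornology.IsBounded S) (hmeas : MeasurableSet S)
    (hpos : 0 < volume {x : Fin d → ℝ | ∃ C : ℝ, ∀ n : ℕ, 1 ≤ n → |disc α S n x| ≤ C}) :
    IsBRS α S := by
  let A : ℕ → Set (Fin d → ℝ) := fun M => {x | ∀ m n, |disc α S n x - disc α S m x| ≤ M}
  have hdisc0 : ∀ x, disc α S 0 x = 0 := fun x => by simp [disc]
  have hA : ∀ M, MeasurableSet (A M) := by
    intro M
    simp only [A, Set.ofPred_forall]
    refine MeasurableSet.iInter fun m => MeasurableSet.iInter fun n => ?_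
    exact measurableSet_le
      (measurable_norm.comp ((measurable_disc α hmeas n).sub (measurable_disc α hmeas m)))
      measurable_const
  have hsub : {x : Fin d → ℝ | ∃ C : ℝ, ∀ n : ℕ, 1 ≤ n → |disc α S n x| ≤ C} ⊆ ⋃ M, A M := by
    rintro x ⟨C, hC⟩
    obtain ⟨M, hM⟩ := exists_nat_ge (2 * C)
    -- `C` is nonnegative because it bounds an absolute value, so it also bounds `disc 0 = 0`
    have hC' : ∀ n, |disc α S n x| ≤ C := by
      intro n
      rcases Nat.eq_zero_or_pos n with rfl | hn
      · rw [hdisc0, abs_zero]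
        exact (abs_nonneg _).trans (hC 1 le_rfl)
      · exact hC n hn
    refine Set.mem_iUnion.2 ⟨M, fun m n => ?_⟩
    linarith [abs_sub (disc α S n x) (disc α S m x), hC' m, hC' n]
  obtain ⟨M, hM⟩ : ∃ M, volume (A M) ≠ 0 := by
    by_contra! h
    exact hpos.ne' (measure_mono_null hsub (measure_iUnion_null h))
  have hfull : volume (A M)ᶜ = 0 := by
    refine (volume_eq_zero_or_compl hα (hA M) ?_ ?_).resolve_left hM
    · intro x l hx m n
      rw [disc_periodic, disc_periodic]
      exact hx m n
    · intro x hx m n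
      rw [disc_add, disc_add, sub_sub_sub_cancel_right]
      exact hx _ _
  refine ⟨M, ?_⟩
  filter_upwards [mem_ae_iff.2 hfull] with x hx n _
  simpa [hdisc0] using hx 0 n
end
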